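/- For every integer k one has: (i) ρ^k, |ρ|^k ∈ S^k_{2,2}(|ρ|) + S^k_{0,1}(|ρ|), uniformly in z ∈ Z₁ ∪ Z₂ ∪ Z₃; consequently (ii) (1−η)ρ^k and (1−η)|ρ|^k belong to 𝒮_0^k; and (iii) (1−η)ρ^k − (1−η)(i√r₀)^k ∈ 𝒮_0^{k−2}. -/

import Mathlib

/- Setting: the cotangent bundle T*Γ of the boundary Γ (dimension n = d−1) is modelled
in local coordinates by `ℝ^n × ℝ^n`.  The data are: `R₀`, the (positive definite,
symmetric) matrix of the principal symbol `r₀(x',ξ') = ⟨R₀(x')ξ',ξ'⟩` of `−Δ_Γ`, and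
`n₀ = n|_Γ > 0`.  `ρ = √(−r₀ + z n₀)` is the square root with `Im ρ > 0`, and
`η = φ₀(r₀/δ₀)` is the cutoff localizing near `ξ' = 0`. -/

open scoped ENNReal

noncomputable section

variable (n : ℕ)

/-- Mixed derivative `∂_{x'}^α ∂_{ξ'}^β a` evaluated on directions `v`, `w`. -/
def Dmix (a : (EuclideanSpace ℝ (Fin n)) × (EuclideanSpace ℝ (Fin n)) → ℂ) (α β : ℕ)
    (v : Fin α → EuclideanSpace ℝ (Fin n)) (w : Fin β → EuclideanSpace ℝ (Fin n))
    (p : (EuclideanSpace ℝ (Fin n)) × (EuclideanSpace ℝ (Fin n))) : ℂ :=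
  iteratedFDeriv ℝ (α + β) a p
    (Fin.append (fun i => ((v i), (0 : EuclideanSpace ℝ (Fin n))))
      (fun i => ((0 : EuclideanSpace ℝ (Fin n)), w i)))

/-- The Japanese bracket `⟨ξ'⟩`. -/
def jap {n : ℕ} (ξ : EuclideanSpace ℝ (Fin n)) : ℝ := Real.sqrt (1 + ‖ξ‖ ^ 2)

/-- `z ∈ Z₁ ∪ Z₂ ∪ Z₃`. -/
def Zall (z : ℂ) : Prop :=
  (z.re = 1 ∧ 0 < |z.im| ∧ |z.im| ≤ 1) ∨ (z.re = -1 ∧ |z.im| ≤ 1) ∨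
    (|z.re| ≤ 1 ∧ |z.im| = 1)

/-- The square root of `w` with nonnegative imaginary part (for `w ∉ [0,∞)` this is the
square root with strictly positive imaginary part). -/
def ssqrt (w : ℂ) : ℂ :=
  if 0 ≤ (w ^ (1 / 2 : ℂ)).im then w ^ (1 / 2 : ℂ) else -(w ^ (1 / 2 : ℂ))

/-- The principal symbol `r₀(x',ξ') = ⟨R₀(x')ξ',ξ'⟩` of `−Δ_Γ`. -/
def rZero (R₀ : EuclideanSpace ℝ (Fin n) → (EuclideanSpace ℝ (Fin n) →L[ℝ] EuclideanSpace ℝ (Fin n)))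
    (p : (EuclideanSpace ℝ (Fin n)) × (EuclideanSpace ℝ (Fin n))) : ℝ :=
  (inner ℝ (R₀ p.1 p.2) p.2 : ℝ)

/-- `ρ(x',ξ',z) = √(−r₀(x',ξ') + z n₀(x'))`, branch with `Im ρ > 0`. -/
def rho (R₀ : EuclideanSpace ℝ (Fin n) → (EuclideanSpace ℝ (Fin n) →L[ℝ] EuclideanSpace ℝ (Fin n)))
    (n₀ : EuclideanSpace ℝ (Fin n) → ℝ) (z : ℂ)
    (p : (EuclideanSpace ℝ (Fin n)) × (EuclideanSpace ℝ (Fin n))) : ℂ :=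
  ssqrt (-(rZero n R₀ p : ℂ) + z * (n₀ p.1 : ℂ))

/-!
Symbol estimates are bounds on the jets of a dilated function. Near the glancing set `r₀` is
bounded, so `ρ² = -r₀ + z n₀` has bounded derivatives. After dilating by `|ρ|²`, which is itself
bounded, all of them are `O(|ρ|²)`. Locally `ρ` is a constant times the principal square root of
`ρ²` divided by its value, hence its dilated derivatives are `O(|ρ|)`: each derivative of `ρ^k`
costs a factor `|ρ|⁻²`. In the elliptic region `ρ²` is a symbol of order `2`, and the same argument
with the dilation of `ξ'` by `⟨ξ'⟩` shows that `ρ` is an elliptic symbol of order `1`. The absolute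
value is the square root of `ρ · conj ρ`. Finally `ρ - i√r₀ = z n₀ / (ρ + i√r₀)` has order `-1`,
so that replacing `ρ` by `i√r₀` gains two orders.
-/

open Filter Asymptotics Topology
open scoped ContDiff

section JetCalculus

variable {ι D F G H : Type*} [NormedAddCommGroup D] [NormedSpace ℝ D]
  [NormedAddCommGroup F] [NormedSpace ℝ F] [NormedAddCommGroup G] [NormedSpace ℝ G]
  [NormedAddCommGroup H] [NormedSpace ℝ H]

theorem exists_isOpen_contDiffOn_of_contDiffAt {f : D → F} {x : D} {m : ℕ}
    (hf : ContDiffAt ℝ m f x) : ∃ u, IsOpen u ∧ x ∈ u ∧ ContDiffOn ℝ m f u := by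
  simpa using hf.contDiffOn' le_rfl (by simp)

theorem norm_iteratedFDeriv_bilinear_le (B : F →L[ℝ] G →L[ℝ] H) {f : D → F} {g : D → G} {x : D}
    {m : ℕ} (hf : ContDiffAt ℝ m f x) (hg : ContDiffAt ℝ m g x) :
    ‖iteratedFDeriv ℝ m (fun y => B (f y) (g y)) x‖ ≤
      ‖B‖ * ∑ j ∈ Finset.range (m + 1), (m.choose j : ℝ) * ‖iteratedFDeriv ℝ j f x‖ *
        ‖iteratedFDeriv ℝ (m - j) g x‖ := by
  obtain ⟨u, hu, hxu, hfu⟩ := exists_isOpen_contDiffOn_of_contDiffAt hf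
  obtain ⟨v, hv, hxv, hgv⟩ := exists_isOpen_contDiffOn_of_contDiffAt hg
  have ho : IsOpen (u ∩ v) := hu.inter hv
  have hx : x ∈ u ∩ v := ⟨hxu, hxv⟩
  simpa only [iteratedFDerivWithin_of_isOpen _ ho hx] using
    B.norm_iteratedFDerivWithin_le_of_bilinear (hfu.mono Set.inter_subset_left)
      (hgv.mono Set.inter_subset_right) ho.uniqueDiffOn hx le_rfl

theorem norm_iteratedFDeriv_comp_le_of_contDiffAt {g : F → G} {f : D → F} {x : D} {m : ℕ}
    (hg : ContDiffAt ℝ m g (f x)) (hf : ContDiffAt ℝ m f x) {C K : ℝ}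
    (hC : ∀ j ≤ m, ‖iteratedFDeriv ℝ j g (f x)‖ ≤ C)
    (hK : ∀ j, 1 ≤ j → j ≤ m → ‖iteratedFDeriv ℝ j f x‖ ≤ K ^ j) :
    ‖iteratedFDeriv ℝ m (fun y => g (f y)) x‖ ≤ m.factorial * C * K ^ m := by
  obtain ⟨u, hu, hxu, hfu⟩ := exists_isOpen_contDiffOn_of_contDiffAt hf
  obtain ⟨v, hv, hxv, hgv⟩ := exists_isOpen_contDiffOn_of_contDiffAt hg
  have ho : IsOpen (u ∩ f ⁻¹' v) := hfu.continuousOn.isOpen_inter_preimage hu hv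
  have hx : x ∈ u ∩ f ⁻¹' v := ⟨hxu, hxv⟩
  have key := norm_iteratedFDerivWithin_comp_le (n := m) (C := C) (D := K) hgv
    (hfu.mono Set.inter_subset_left) le_rfl hv.uniqueDiffOn ho.uniqueDiffOn
    (fun y hy => hy.2) hx
    (fun j hj => by rw [iteratedFDerivWithin_of_isOpen _ hv hxv]; exact hC j hj)
    (fun j h1 hj => by rw [iteratedFDerivWithin_of_isOpen _ ho hx]; exact hK j h1 hj)
  rwa [iteratedFDerivWithin_of_isOpen _ ho hx] at key

theorem iteratedFDeriv_comp_add_clm {f : F → G} {x : F} {L : D →L[ℝ] F} {m : ℕ}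
    (hf : ContDiffAt ℝ m f x) : iteratedFDeriv ℝ m (fun y => f (x + L y)) 0 =
      (iteratedFDeriv ℝ m f x).compContinuousLinearMap fun _ => L := by
  obtain ⟨u, hu, hxu, hfu⟩ := exists_isOpen_contDiffOn_of_contDiffAt hf
  have hu' : IsOpen ((x + ·) ⁻¹' u) := hu.preimage (continuous_const_add x)
  have ho : IsOpen (L ⁻¹' ((x + ·) ⁻¹' u)) := hu'.preimage L.continuous
  have h0 : L 0 ∈ (x + ·) ⁻¹' u := by simpa using hxu
  have key := L.iteratedFDerivWithin_comp_right (f := fun y => f (x + y)) (n := m)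
    (hfu.comp (contDiff_const.add contDiff_id).contDiffOn (Set.mapsTo_preimage _ _))
    hu'.uniqueDiffOn ho.uniqueDiffOn h0 le_rfl
  rw [iteratedFDerivWithin_of_isOpen _ ho h0, iteratedFDerivWithin_of_isOpen _ hu' h0,
    iteratedFDeriv_comp_add_left, map_zero, add_zero] at key
  exact key

/-- The space `C_b^∞` of smooth functions all of whose derivatives are bounded. -/
structure HasBoundedDerivs (f : D → F) : Prop where
  contDiff : ContDiff ℝ ∞ f
  bounded (m : ℕ) : ∃ C : ℝ, ∀ x, ‖iteratedFDeriv ℝ m f x‖ ≤ C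

theorem hasBoundedDerivs_of_hasCompactSupport {f : D → F} (h : HasCompactSupport f)
    (hf : ContDiff ℝ ∞ f) : HasBoundedDerivs f where
  contDiff := hf
  bounded m := (h.iteratedFDeriv m).exists_bound_of_continuous
    (hf.continuous_iteratedFDeriv (mod_cast le_top))

theorem hasBoundedDerivs_of_eq_zero {f : ℝ → F} {C : ℝ} (hf : ContDiff ℝ ∞ f)
    (hzero : ∀ t, C ≤ |t| → f t = 0) : HasBoundedDerivs f :=
  hasBoundedDerivs_of_hasCompactSupport (.intro (isCompact_Icc (a := -C) (b := C)) fun t ht =>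
    hzero t (not_lt.1 fun h => ht (abs_le.1 h.le))) hf

/-- `JetIsBigO l f x M`: along `l`, the function `f i` is smooth at `x i` and each of its
derivatives there is `O(M i)`. This is the calculus in which symbol estimates, uniform in all
parameters, are carried out: `i` runs over the parameters and `M` is the order function. -/
structure JetIsBigO (l : Filter ι) (f : ι → D → F) (x : ι → D) (M : ι → ℝ) : Prop where
  contDiffAt : ∀ᶠ i in l, ContDiffAt ℝ ∞ (f i) (x i)
  isBigO : ∀ m : ℕ, (fun i => iteratedFDeriv ℝ m (f i) (x i)) =O[l] M

namespace JetIsBigO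

variable {l l' : Filter ι} {f g : ι → D → F} {x : ι → D} {M N : ι → ℝ}

theorem of_contDiffAt {φ : D → F} {a : D} (hφ : ContDiffAt ℝ ∞ φ a) (hx : ∀ᶠ i in l, x i = a) :
    JetIsBigO l (fun _ => φ) x 1 where
  contDiffAt := hx.mono fun i hi => by rwa [hi]
  isBigO m := (isBigO_const_const (iteratedFDeriv ℝ m φ a) one_ne_zero l).congr'
    (hx.mono fun i hi => congrArg (iteratedFDeriv ℝ m φ) hi.symm) .rfl

theorem value_isBigO (hf : JetIsBigO l f x M) : (fun i => f i (x i)) =O[l] M :=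
  (isBigO_of_le l fun _ => (norm_iteratedFDeriv_zero (𝕜 := ℝ)).ge).trans (hf.isBigO 0)

theorem trans_isBigO (hf : JetIsBigO l f x M) (hMN : M =O[l] N) : JetIsBigO l f x N :=
  ⟨hf.contDiffAt, fun m => (hf.isBigO m).trans hMN⟩

theorem congr (hf : JetIsBigO l f x M) (hgf : ∀ᶠ i in l, g i =ᶠ[𝓝 (x i)] f i) :
    JetIsBigO l g x M where
  contDiffAt := (hf.contDiffAt.and hgf).mono fun _ h => h.1.congr_of_eventuallyEq h.2
  isBigO m := (hf.isBigO m).congr'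
    (hgf.mono fun _ h => ((h.iteratedFDeriv ℝ m).eq_of_nhds).symm) .rfl

theorem sup (hf : JetIsBigO l f x M) (hf' : JetIsBigO l' f x M) : JetIsBigO (l ⊔ l') f x M :=
  ⟨eventually_sup.2 ⟨hf.contDiffAt, hf'.contDiffAt⟩, fun m => (hf.isBigO m).sup (hf'.isBigO m)⟩

theorem const {c : ι → F} (hc : c =O[l] M) : JetIsBigO l (fun i (_ : D) => c i) x M where
  contDiffAt := .of_forall fun _ => contDiffAt_const
  isBigO
  | 0 => (isBigO_of_le l fun _ => norm_iteratedFDeriv_zero.le).trans hc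
  | m + 1 => by
    simpa only [iteratedFDeriv_succ_const, Pi.zero_apply] using isBigO_zero M l

theorem add (hf : JetIsBigO l f x M) (hg : JetIsBigO l g x M) : JetIsBigO l (f + g) x M where
  contDiffAt := (hf.contDiffAt.and hg.contDiffAt).mono fun _ h => h.1.add h.2
  isBigO m := ((hf.isBigO m).add (hg.isBigO m)).congr'
    ((hf.contDiffAt.and hg.contDiffAt).mono fun _ h => (iteratedFDeriv_add_apply
      (h.1.of_le (mod_cast le_top)) (h.2.of_le (mod_cast le_top))).symm) .rfl

theorem clm_apply (L : F →L[ℝ] G) (hf : JetIsBigO l f x M) :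
    JetIsBigO l (fun i y => L (f i y)) x M where
  contDiffAt := hf.contDiffAt.mono fun _ h => L.contDiff.contDiffAt.comp _ h
  isBigO m := (IsBigO.of_bound ‖L‖ (hf.contDiffAt.mono fun _ h =>
    L.norm_iteratedFDeriv_comp_left h (mod_cast le_top))).trans (hf.isBigO m)

theorem sub (hf : JetIsBigO l f x M) (hg : JetIsBigO l g x M) : JetIsBigO l (f - g) x M := by
  rw [sub_eq_add_neg]
  exact hf.add (hg.clm_apply (-ContinuousLinearMap.id ℝ F))

theorem bilinear_apply (B : F →L[ℝ] G →L[ℝ] H) {g : ι → D → G} (hf : JetIsBigO l f x M)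
    (hg : JetIsBigO l g x N) : JetIsBigO l (fun i y => B (f i y) (g i y)) x (M * N) where
  contDiffAt := (hf.contDiffAt.and hg.contDiffAt).mono fun _ h =>
    B.isBoundedBilinearMap.contDiff.contDiffAt.comp _ (h.1.prodMk h.2)
  isBigO m := by
    have leibniz : (fun i => iteratedFDeriv ℝ m (fun y => B (f i y) (g i y)) (x i)) =O[l]
        fun i => ∑ j ∈ Finset.range (m + 1), (m.choose j : ℝ) *
          ‖iteratedFDeriv ℝ j (f i) (x i)‖ * ‖iteratedFDeriv ℝ (m - j) (g i) (x i)‖ :=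
      .of_bound ‖B‖ ((hf.contDiffAt.and hg.contDiffAt).mono fun i h =>
        (norm_iteratedFDeriv_bilinear_le B (h.1.of_le (mod_cast le_top))
          (h.2.of_le (mod_cast le_top))).trans (by gcongr; exact Real.le_norm_self _))
    refine leibniz.trans (IsBigO.fun_sum fun j _ => ?_)
    exact (((hf.isBigO j).norm_left.const_mul_left _).mul (hg.isBigO (m - j)).norm_left)

theorem exists_eventually_bound (hf : JetIsBigO l f x M) (m : ℕ) :
    ∃ C : ℝ, ∀ᶠ i in l, ∀ j ≤ m, ‖iteratedFDeriv ℝ j (f i) (x i)‖ ≤ C * ‖M i‖ := by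
  have h : ∀ᶠ C in atTop, ∀ j ≤ m, IsBigOWith C l (fun i => iteratedFDeriv ℝ j (f i) (x i)) M :=
    (Set.finite_Iic m).eventually_all.2 fun j _ =>
      isBigO_iff_eventually_isBigOWith.1 (hf.isBigO j)
  obtain ⟨C, hC⟩ := h.exists
  exact ⟨C, (Set.finite_Iic m).eventually_all.2 fun j hj => (hC j hj).bound⟩

theorem comp {φ : ι → F → G} (hφ : JetIsBigO l φ (fun i => f i (x i)) M)
    (hf : JetIsBigO l f x 1) : JetIsBigO l (fun i y => φ i (f i y)) x M where
  contDiffAt := (hφ.contDiffAt.and hf.contDiffAt).mono fun _ h => h.1.comp _ h.2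
  isBigO m := by
    obtain ⟨C, hC⟩ := hφ.exists_eventually_bound m
    obtain ⟨K, hK⟩ := hf.exists_eventually_bound m
    refine .of_bound (m.factorial * C * (max K 1) ^ m) ?_
    filter_upwards [hφ.contDiffAt, hf.contDiffAt, hC, hK] with i hφi hfi hCi hKi
    have hK' : ∀ j, 1 ≤ j → j ≤ m → ‖iteratedFDeriv ℝ j (f i) (x i)‖ ≤ max K 1 ^ j :=
      fun j h1 hj => calc
        _ ≤ K * ‖(1 : ι → ℝ) i‖ := hKi j hj
        _ ≤ max K 1 := by simp
        _ ≤ max K 1 ^ j := le_self_pow₀ (le_max_right _ _) (by lia)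
    exact (norm_iteratedFDeriv_comp_le_of_contDiffAt (hφi.of_le (mod_cast le_top))
      (hfi.of_le (mod_cast le_top)) hCi hK').trans_eq (by ring)

theorem comp_add_clm {x : ι → F} {f : ι → F → G} (hf : JetIsBigO l f x M) {L : ι → D →L[ℝ] F}
    (hL : L =O[l] (1 : ι → ℝ)) : JetIsBigO l (fun i y => f i (x i + L i y)) 0 M where
  contDiffAt := hf.contDiffAt.mono fun i h => by
    refine ContDiffAt.comp (0 : D) ?_ (contDiffAt_const.add (L i).contDiff.contDiffAt)
    simpa using h
  isBigO m := by
    refine (IsBigO.of_bound 1 ?_).trans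
      (g := fun i => ‖iteratedFDeriv ℝ m (f i) (x i)‖ * ‖L i‖ ^ m) ?_
    · filter_upwards [hf.contDiffAt] with i h
      rw [Pi.zero_apply, iteratedFDeriv_comp_add_clm (h.of_le (mod_cast le_top)), one_mul,
        Real.norm_of_nonneg (by positivity)]
      simpa using (iteratedFDeriv ℝ m (f i) (x i)).norm_compContinuousLinearMap_le fun _ => L i
    · simpa using (hf.isBigO m).norm_left.mul (hL.norm_left.pow m)

theorem dilate {f : ι → D → F} {s : ι → ℝ} (hf : JetIsBigO l f 0 1) (hs : s =O[l] (1 : ι → ℝ))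
    (hf0 : (fun i => f i 0) =O[l] s) : JetIsBigO l (fun i y => f i (s i • y)) 0 s where
  contDiffAt := hf.contDiffAt.mono fun i h => by
    refine ContDiffAt.comp (0 : D) ?_ (contDiffAt_id.const_smul (s i))
    simpa using h
  isBigO
  | 0 => by
    refine IsBigO.trans (isBigO_of_le l fun i => ?_) hf0
    simp
  | m + 1 => by
    have hD : (fun i => iteratedFDeriv ℝ (m + 1) (fun y => f i (s i • y)) 0) =ᶠ[l]
        fun i => s i ^ (m + 1) • iteratedFDeriv ℝ (m + 1) (f i) 0 := by
      filter_upwards [hf.contDiffAt] with i h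
      have e := iteratedFDeriv_comp_add_clm (m := m + 1) (L := s i • ContinuousLinearMap.id ℝ D)
        (h.of_le (mod_cast le_top))
      ext v
      simpa [ContinuousMultilinearMap.map_smul_univ] using congr($e v)
    refine hD.trans_isBigO ?_
    simpa [pow_succ] using (hs.pow m).mul (isBigO_refl s l) |>.smul (hf.isBigO (m + 1))

section NormedField

variable {𝕂 : Type*} [NormedField 𝕂] [NormedAlgebra ℝ 𝕂] {f g : ι → D → 𝕂}

theorem mul (hf : JetIsBigO l f x M) (hg : JetIsBigO l g x N) : JetIsBigO l (f * g) x (M * N) :=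
  hf.bilinear_apply (ContinuousLinearMap.mul ℝ 𝕂) hg

theorem div_value (hf : JetIsBigO l f x M) (hM : M =O[l] fun i => f i (x i))
    (hM0 : ∀ᶠ i in l, M i ≠ 0) : JetIsBigO l (fun i y => f i y / f i (x i)) x 1 := by
  have hinv : (fun i => (f i (x i))⁻¹) =O[l] M⁻¹ := hM.inv_rev (hM0.mono fun i h h' => (h h').elim)
  have h1 : (M * M⁻¹) =O[l] (1 : ι → ℝ) :=
    EventuallyEq.isBigO (hM0.mono fun i hi => mul_inv_cancel₀ hi)
  simp only [div_eq_mul_inv]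
  exact (hf.mul (.const hinv)).trans_isBigO h1

theorem comp_div_value {φ : 𝕂 → F} (hf : JetIsBigO l f x M) (hM : M =O[l] fun i => f i (x i))
    (hM0 : ∀ᶠ i in l, M i ≠ 0) (hφ : ContDiffAt ℝ ∞ φ 1) :
    JetIsBigO l (fun i y => φ (f i y / f i (x i))) x 1 := by
  have h1 : ∀ᶠ i in l, f i (x i) / f i (x i) = 1 :=
    (hM.eq_zero_imp.and hM0).mono fun i h => div_self (mt h.1 h.2)
  exact comp (φ := fun _ => φ) (.of_contDiffAt hφ h1) (hf.div_value hM hM0)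

theorem zpow (hf : JetIsBigO l f x M) (hM : M =O[l] fun i => f i (x i))
    (hM0 : ∀ᶠ i in l, M i ≠ 0) (k : ℤ) : JetIsBigO l (f ^ k) x (M ^ k) := by
  have hφ : ContDiffAt ℝ ∞ (fun w : 𝕂 => w ^ k) 1 := by
    cases k with
    | ofNat k => simpa using contDiffAt_id.pow k
    | negSucc k =>
      simpa only [zpow_negSucc] using! ContDiffAt.fun_inv (contDiffAt_id.pow (k + 1)) (by simp)
  have hvalue : (fun i => f i (x i) ^ k) =O[l] (M ^ k) :=
    (IsTheta.zpow ⟨hf.value_isBigO, hM⟩ k).1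
  have key := (JetIsBigO.const hvalue).mul (hf.comp_div_value hM hM0 hφ)
  rw [mul_one] at key
  refine key.congr ?_
  filter_upwards [hM.eq_zero_imp, hM0] with i hi hMi
  refine .of_forall fun y => ?_
  simp [← mul_zpow, mul_div_cancel₀ _ (mt hi hMi)]

theorem inv (hf : JetIsBigO l f x M) (hM : M =O[l] fun i => f i (x i))
    (hM0 : ∀ᶠ i in l, M i ≠ 0) : JetIsBigO l f⁻¹ x M⁻¹ := by
  simpa using hf.zpow hM hM0 (-1)

theorem eventually_ne_zero (hf : JetIsBigO l f x M) (hM : M =O[l] fun i => f i (x i))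
    (hM0 : ∀ᶠ i in l, M i ≠ 0) : ∀ᶠ i in l, ∀ᶠ y in 𝓝 (x i), f i y ≠ 0 := by
  filter_upwards [hf.contDiffAt, hM.eq_zero_imp, hM0] with i hfi hi hMi using
    hfi.continuousAt.eventually_ne (mt hi hMi)

theorem zpow_sub_zpow (hf : JetIsBigO l f x M) (hfM : M =O[l] fun i => f i (x i))
    (hg : JetIsBigO l g x M) (hgM : M =O[l] fun i => g i (x i)) (hM0 : ∀ᶠ i in l, M i ≠ 0)
    (hfg : JetIsBigO l (f - g) x N) (k : ℤ) :
    JetIsBigO l (f ^ k - g ^ k) x (M ^ (k - 1) * N) := by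
  have hne := (hf.eventually_ne_zero hfM hM0).and (hg.eventually_ne_zero hgM hM0)
  induction k with
  | zero => simpa only [zpow_zero, sub_self] using! JetIsBigO.const (isBigO_zero _ l)
  | succ k ih =>
    have hM : (M ^ ((k : ℤ) - 1) * N * M) =O[l] (M ^ ((k : ℤ) + 1 - 1) * N) :=
      EventuallyEq.isBigO <| hM0.mono fun i hi => by
        simp only [Pi.mul_apply, Pi.pow_apply, zpow_sub_one₀ hi, zpow_natCast,
          add_sub_cancel_right]
        field_simp
    have h1 : JetIsBigO l (f ^ (k : ℤ) * (f - g)) x (M ^ ((k : ℤ) + 1 - 1) * N) := by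
      simpa using (hf.zpow hfM hM0 k).mul hfg
    refine (h1.add ((ih.mul hg).trans_isBigO hM)).congr ?_
    filter_upwards [hne] with i hi
    filter_upwards [hi.1, hi.2] with y hfy hgy
    simp only [Pi.add_apply, Pi.sub_apply, Pi.mul_apply, Pi.pow_apply, zpow_add_one₀ hfy,
      zpow_add_one₀ hgy]
    ring
  | pred k ih =>
    have hM : (M ^ (-(k : ℤ) - 1) * N * M⁻¹) =O[l] (M ^ (-(k : ℤ) - 1 - 1) * N) :=
      EventuallyEq.isBigO <| hM0.mono fun i hi => by
        simp only [Pi.mul_apply, Pi.pow_apply, zpow_sub_one₀ hi, zpow_neg, zpow_natCast,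
          Pi.inv_apply]
        field_simp
    have h1 : JetIsBigO l (f ^ (-(k : ℤ) - 1) * (f - g)) x (M ^ (-(k : ℤ) - 1) * N) :=
      (hf.zpow hfM hM0 _).mul hfg
    refine (((ih.sub h1).mul (hg.inv hgM hM0)).trans_isBigO hM).congr ?_
    filter_upwards [hne] with i hi
    filter_upwards [hi.1, hi.2] with y hfy hgy
    simp only [Pi.mul_apply, Pi.sub_apply, Pi.pow_apply, Pi.inv_apply, zpow_sub_one₀ hfy,
      zpow_sub_one₀ hgy]
    field_simp
    ring

end NormedField

theorem sqrt {f g : ι → D → ℂ} (hg : JetIsBigO l g x (M ^ 2)) (hM : M =O[l] fun i => f i (x i))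
    (hM0 : ∀ᶠ i in l, M i ≠ 0) (hf : ∀ᶠ i in l, ContinuousAt (f i) (x i))
    (hfg : ∀ᶠ i in l, ∀ᶠ y in 𝓝 (x i), f i y ^ 2 = g i y) : JetIsBigO l f x M := by
  have hsqrt : ContDiffAt ℝ ∞ (fun w : ℂ => w ^ (2⁻¹ : ℂ)) 1 :=
    ((analyticAt_id.cpow analyticAt_const (by simp)).contDiffAt (𝕜 := ℂ)).restrict_scalars ℝ
  have hsq : ∀ᶠ i in l, f i (x i) ^ 2 = g i (x i) := hfg.mono fun i h => h.self_of_nhds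
  have hvalue : (fun i => f i (x i)) =O[l] M := by
    refine IsBigO.of_pow two_ne_zero (hg.value_isBigO.congr' ?_ .rfl)
    exact hsq.mono fun i h => h.symm
  have hM2 : (M ^ 2) =O[l] fun i => g i (x i) := (hM.pow 2).congr' .rfl hsq
  have key := (JetIsBigO.const hvalue).mul
    (hg.comp_div_value hM2 (hM0.mono fun i hi => pow_ne_zero 2 hi) hsqrt)
  rw [mul_one] at key
  refine key.congr ?_
  filter_upwards [hM.eq_zero_imp, hM0, hf, hfg, hsq] with i hi hMi hfi hfgi hsqi
  have hne : f i (x i) ≠ 0 := mt hi hMi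
  -- By continuity `f i / f i (x i)` stays in the right half plane, where it is the principal root.
  have hre : ∀ᶠ y in 𝓝 (x i), 0 < (f i y / f i (x i)).re :=
    (Complex.continuous_re.continuousAt.comp (hfi.div_const _)).eventually
      (lt_mem_nhds (by simp [div_self hne]))
  filter_upwards [hre, hfgi] with y hy hfgy
  simp only [Pi.mul_apply, ← hsqi, ← hfgy, ← div_pow]
  rw [Complex.sq_cpow_two_inv hy, mul_div_cancel₀ _ hne]

theorem norm {f : ι → D → ℂ} (hf : JetIsBigO l f x M) (hM : M =O[l] fun i => f i (x i))
    (hM0 : ∀ᶠ i in l, M i ≠ 0) : JetIsBigO l (fun i y => (‖f i y‖ : ℂ)) x M := by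
  have hsq : JetIsBigO l (fun i y => f i y * starRingEnd ℂ (f i y)) x (M ^ 2) := by
    rw [sq]
    exact hf.mul (hf.clm_apply Complex.conjCLE.toContinuousLinearMap)
  refine hsq.sqrt ?_ hM0 ?_ ?_
  · exact hM.trans (isBigO_of_le l fun i => by simp)
  · exact hf.contDiffAt.mono fun i h =>
      Complex.continuous_ofReal.continuousAt.comp h.continuousAt.norm
  · exact .of_forall fun i => .of_forall fun y => by rw [Complex.mul_conj']

end JetIsBigO

theorem HasBoundedDerivs.jetIsBigO {f : D → F} (hf : HasBoundedDerivs f) (l : Filter ι)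
    (x : ι → D) : JetIsBigO l (fun _ => f) x 1 where
  contDiffAt := .of_forall fun _ => hf.contDiff.contDiffAt
  isBigO m := by
    obtain ⟨C, hC⟩ := hf.bounded m
    exact .of_bound C (.of_forall fun i => by simpa using hC (x i))

end JetCalculus

section Symbols

variable {n} {Λ : Type*} {s t : ℝ}

/-- The local model `ℝⁿ × ℝⁿ` of the cotangent bundle, with points `(x', ξ')`. -/
abbrev PhaseSpace (n : ℕ) : Type := EuclideanSpace ℝ (Fin n) × EuclideanSpace ℝ (Fin n)

/-- The anisotropic dilation `(x', ξ') ↦ (s x', t ξ')`. A symbol estimate at `p` says that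
`y ↦ a (p + dilation s t y)`, for suitable `s` and `t`, has uniformly controlled derivatives
at `0`. -/
def dilation (s t : ℝ) : PhaseSpace n →L[ℝ] PhaseSpace n :=
  (s • ContinuousLinearMap.id ℝ _).prodMap (t • ContinuousLinearMap.id ℝ _)

theorem dilation_apply (y : PhaseSpace n) : dilation s t y = (s • y.1, t • y.2) := rfl

theorem tendsto_add_dilation (p : PhaseSpace n) :
    Tendsto (fun y => p + dilation s t y) (𝓝 0) (𝓝 p) := by
  simpa using! ((continuous_const_add p).comp (dilation s t).continuous).tendsto 0

theorem contDiffAt_of_comp_dilation {a : PhaseSpace n → ℂ} {p : PhaseSpace n} (hs : s ≠ 0)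
    (ht : t ≠ 0) (ha : ContDiffAt ℝ ∞ (fun y => a (p + dilation s t y)) 0) :
    ContDiffAt ℝ ∞ a p := by
  have hcomp : a = (fun y => a (p + dilation s t y)) ∘ fun q => dilation s⁻¹ t⁻¹ (q - p) := by
    funext q
    simp [dilation_apply, smul_smul, hs, ht, ← Prod.mk_sub_mk]
  rw [hcomp]
  refine ContDiffAt.comp p (by simpa using! ha) ?_
  exact (dilation s⁻¹ t⁻¹).contDiff.contDiffAt.comp p (contDiffAt_id.sub contDiffAt_const)

theorem dilation_append {α β : ℕ} (v : Fin α → EuclideanSpace ℝ (Fin n))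
    (w : Fin β → EuclideanSpace ℝ (Fin n)) (i : Fin (α + β)) :
    dilation s t (Fin.append (fun j => (v j, 0)) (fun j => (0, w j)) i) =
      Fin.append (fun _ => s) (fun _ => t) i •
        Fin.append (fun j => (v j, 0)) (fun j => (0, w j)) i := by
  refine Fin.addCases (fun j => ?_) (fun j => ?_) i <;> simp [dilation_apply]

theorem iteratedFDeriv_comp_dilation_append {a : PhaseSpace n → ℂ} {p : PhaseSpace n} {α β : ℕ}
    (ha : ContDiffAt ℝ (α + β : ℕ) a p) (v : Fin α → EuclideanSpace ℝ (Fin n))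
    (w : Fin β → EuclideanSpace ℝ (Fin n)) :
    iteratedFDeriv ℝ (α + β) (fun y => a (p + dilation s t y)) 0
      (Fin.append (fun j => (v j, 0)) fun j => (0, w j)) =
        (s ^ α * t ^ β) • Dmix n a α β v w p := by
  rw [iteratedFDeriv_comp_add_clm ha, ContinuousMultilinearMap.compContinuousLinearMap_apply]
  simp only [dilation_append, ContinuousMultilinearMap.map_smul_univ, Fin.prod_univ_add,
    Fin.append_left, Fin.append_right, Fin.prod_const]
  rfl

theorem norm_append_le_one {α β : ℕ} {v : Fin α → EuclideanSpace ℝ (Fin n)}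
    {w : Fin β → EuclideanSpace ℝ (Fin n)} (hv : ∀ j, ‖v j‖ ≤ 1) (hw : ∀ j, ‖w j‖ ≤ 1)
    (i : Fin (α + β)) :
    ‖(Fin.append (fun j => (v j, 0)) (fun j => (0, w j)) i : PhaseSpace n)‖ ≤ 1 := by
  refine Fin.addCases (fun j => ?_) (fun j => ?_) i
  · simpa using hv j
  · simpa using hw j

theorem norm_Dmix_mul_le {a : PhaseSpace n → ℂ} {p : PhaseSpace n} (hs : 0 < s) (ht : 0 < t)
    (ha : ContDiffAt ℝ ∞ (fun y => a (p + dilation s t y)) 0) {α β : ℕ}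
    {v : Fin α → EuclideanSpace ℝ (Fin n)} {w : Fin β → EuclideanSpace ℝ (Fin n)}
    (hv : ∀ j, ‖v j‖ ≤ 1) (hw : ∀ j, ‖w j‖ ≤ 1) :
    ‖Dmix n a α β v w p‖ * (s ^ α * t ^ β) ≤
      ‖iteratedFDeriv ℝ (α + β) (fun y => a (p + dilation s t y)) 0‖ := by
  have hap := (contDiffAt_of_comp_dilation hs.ne' ht.ne' ha).of_le (m := (α + β : ℕ))
    (mod_cast le_top)
  calc
    _ = ‖(s ^ α * t ^ β) • Dmix n a α β v w p‖ := by
      rw [norm_smul, Real.norm_of_nonneg (by positivity), mul_comm]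
    _ ≤ _ := by
      rw [← iteratedFDeriv_comp_dilation_append hap]
      exact ContinuousMultilinearMap.unit_le_opNorm _
        ((pi_norm_le_iff_of_nonneg zero_le_one).2 (norm_append_le_one hv hw))

/-- The family `a` of symbols, indexed by a parameter in `Λ`, satisfies on `U` the estimates
defining the class `S^ℓ_{δ₁,δ₂}(m)`, with constants independent of the parameter. The classes
`𝒮_0^k` are the case `m = ⟨ξ'⟩`, `ℓ = k`, `δ₁ = 0`, `δ₂ = 1`. -/
def IsSymbolOn (U : Set (Λ × PhaseSpace n)) (m : Λ × PhaseSpace n → ℝ) (ℓ δ₁ δ₂ : ℝ)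
    (a : Λ → PhaseSpace n → ℂ) : Prop :=
  ∀ α β : ℕ, ∃ C : ℝ, ∀ i ∈ U,
    ∀ (v : Fin α → EuclideanSpace ℝ (Fin n)) (w : Fin β → EuclideanSpace ℝ (Fin n)),
      (∀ j, ‖v j‖ ≤ 1) → (∀ j, ‖w j‖ ≤ 1) →
        ‖Dmix n (a i.1) α β v w i.2‖ ≤ C * m i ^ (ℓ - δ₁ * α - δ₂ * β)

namespace IsSymbolOn

variable {U V : Set (Λ × PhaseSpace n)} {m m' : Λ × PhaseSpace n → ℝ} {ℓ δ₁ δ₂ : ℝ}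
  {a : Λ → PhaseSpace n → ℂ}

theorem of_jetIsBigO (hm : ∀ i ∈ U, 0 < m i) (ha : JetIsBigO (𝓟 U)
    (fun i y => a i.1 (i.2 + dilation (m i ^ δ₁) (m i ^ δ₂) y)) 0 fun i => m i ^ ℓ) :
    IsSymbolOn U m ℓ δ₁ δ₂ a := by
  intro α β
  obtain ⟨C, hC⟩ := (ha.isBigO (α + β)).bound
  refine ⟨C, fun i hi v w hv hw => ?_⟩
  have hmi := hm i hi
  have hweight : m i ^ (ℓ - δ₁ * α - δ₂ * β) = m i ^ ℓ / ((m i ^ δ₁) ^ α * (m i ^ δ₂) ^ β) := by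
    rw [Real.rpow_sub hmi, Real.rpow_sub hmi, Real.rpow_mul_natCast hmi.le,
      Real.rpow_mul_natCast hmi.le, div_div]
  rw [hweight, ← mul_div_assoc, le_div_iff₀ (by positivity)]
  refine (norm_Dmix_mul_le (Real.rpow_pos_of_pos hmi _) (Real.rpow_pos_of_pos hmi _)
    (eventually_principal.1 ha.contDiffAt i hi) hv hw).trans ((hC hi).trans_eq ?_)
  rw [Real.norm_of_nonneg (Real.rpow_nonneg hmi.le _)]

theorem of_jetIsBigO_mul_zpow {χ f : Λ → PhaseSpace n → ℂ} (hm : ∀ i ∈ U, 0 < m i)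
    (hχ : JetIsBigO (𝓟 U)
      (fun i y => χ i.1 (i.2 + dilation (m i ^ δ₁) (m i ^ δ₂) y)) 0 1)
    (hf : JetIsBigO (𝓟 U)
      (fun i y => f i.1 (i.2 + dilation (m i ^ δ₁) (m i ^ δ₂) y)) 0 m)
    (hmf : m =O[𝓟 U] fun i => f i.1 i.2) (k : ℤ) :
    IsSymbolOn U m k δ₁ δ₂ fun z q => χ z q * f z q ^ k := by
  have hfk := hf.zpow (by simpa using hmf) (eventually_principal.2 fun i hi => (hm i hi).ne') k
  refine of_jetIsBigO hm ?_
  simpa [Real.rpow_intCast] using! hχ.mul hfk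

theorem congr_weight (ha : IsSymbolOn U m ℓ δ₁ δ₂ a) (hm : ∀ i ∈ U, 0 < m i)
    (hm' : ∀ i ∈ U, 0 < m' i) (h : m =Θ[𝓟 U] m') : IsSymbolOn U m' ℓ δ₁ δ₂ a := by
  intro α β
  obtain ⟨C, hC⟩ := ha α β
  obtain ⟨K, hK⟩ := (IsTheta.rpow (r := ℓ - δ₁ * α - δ₂ * β)
    (eventually_principal.2 fun i hi => (hm i hi).le)
    (eventually_principal.2 fun i hi => (hm' i hi).le) h).isBigO.bound
  refine ⟨|C| * K, fun i hi v w hv hw => ?_⟩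
  have hKi : m i ^ (ℓ - δ₁ * α - δ₂ * β) ≤ K * m' i ^ (ℓ - δ₁ * α - δ₂ * β) := by
    have := eventually_principal.1 hK i hi
    rwa [Real.norm_of_nonneg (Real.rpow_nonneg (hm i hi).le _),
      Real.norm_of_nonneg (Real.rpow_nonneg (hm' i hi).le _)] at this
  calc
    _ ≤ C * m i ^ (ℓ - δ₁ * α - δ₂ * β) := hC i hi v w hv hw
    _ ≤ |C| * m i ^ (ℓ - δ₁ * α - δ₂ * β) :=
      mul_le_mul_of_nonneg_right (le_abs_self C) (Real.rpow_nonneg (hm i hi).le _)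
    _ ≤ |C| * (K * m' i ^ (ℓ - δ₁ * α - δ₂ * β)) := by gcongr
    _ = _ := (mul_assoc _ _ _).symm

theorem eventually_bound (ha : IsSymbolOn U m ℓ δ₁ δ₂ a) (hm : ∀ i, 0 ≤ m i) (α β : ℕ) :
    ∀ᶠ C in atTop, ∀ i ∈ U,
      ∀ (v : Fin α → EuclideanSpace ℝ (Fin n)) (w : Fin β → EuclideanSpace ℝ (Fin n)),
        (∀ j, ‖v j‖ ≤ 1) → (∀ j, ‖w j‖ ≤ 1) →
          ‖Dmix n (a i.1) α β v w i.2‖ ≤ C * m i ^ (ℓ - δ₁ * α - δ₂ * β) := by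
  obtain ⟨C, hC⟩ := ha α β
  filter_upwards [eventually_ge_atTop C] with C' hCC' i hi v w hv hw
  exact (hC i hi v w hv hw).trans
    (mul_le_mul_of_nonneg_right hCC' (Real.rpow_nonneg (hm i) _))

theorem of_eventuallyEq_zero (ha : IsSymbolOn U m ℓ δ₁ δ₂ a) (hm : ∀ i, 0 ≤ m i)
    (h : ∀ i ∈ V, i ∉ U → a i.1 =ᶠ[𝓝 i.2] 0) : IsSymbolOn V m ℓ δ₁ δ₂ a := by
  intro α β
  obtain ⟨C, hC, hC0⟩ := ((ha.eventually_bound hm α β).and (eventually_ge_atTop 0)).exists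
  refine ⟨C, fun i hi v w hv hw => ?_⟩
  by_cases hiU : i ∈ U
  · exact hC i hiU v w hv hw
  · have hzero : iteratedFDeriv ℝ (α + β) (a i.1) i.2 = 0 := by
      rw [((h i hi hiU).iteratedFDeriv ℝ (α + β)).eq_of_nhds, Pi.zero_def,
        iteratedFDeriv_fun_zero, Pi.zero_apply]
    simpa [Dmix, hzero] using mul_nonneg hC0 (Real.rpow_nonneg (hm i) _)

end IsSymbolOn

end Symbols

section SquareRoot

theorem ssqrt_sq (w : ℂ) : ssqrt w ^ 2 = w := by
  unfold ssqrt
  split_ifs <;> simp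

theorem ssqrt_im_nonneg (w : ℂ) : 0 ≤ (ssqrt w).im := by
  unfold ssqrt
  split_ifs with h
  · exact h
  · exact (Left.neg_pos_iff.2 (not_le.1 h)).le

theorem ssqrt_eq_I_mul_cpow {w : ℂ} (hw : -w ∈ Complex.slitPlane) :
    ssqrt w = Complex.I * (-w) ^ (2⁻¹ : ℂ) := by
  have hre : 0 < ((-w) ^ (2⁻¹ : ℂ)).re := by
    rw [Complex.cpow_inv_two_re, Real.sqrt_pos]
    refine half_pos ?_
    rcases Complex.mem_slitPlane_iff.1 hw with h | h
    · positivity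
    · linarith [neg_abs_le (-w).re, Complex.abs_re_lt_norm.2 h]
  have hsq : ssqrt w ^ 2 = (Complex.I * (-w) ^ (2⁻¹ : ℂ)) ^ 2 := by
    simp [ssqrt_sq, mul_pow]
  refine (sq_eq_sq_iff_eq_or_eq_neg.1 hsq).resolve_right fun h => ?_
  have him := ssqrt_im_nonneg w
  rw [h, Complex.neg_im, Complex.I_mul_im] at him
  linarith

theorem continuousAt_ssqrt {w : ℂ} (hw : -w ∈ Complex.slitPlane) : ContinuousAt ssqrt w := by
  have hcont : ContinuousAt (fun u : ℂ => Complex.I * (-u) ^ (2⁻¹ : ℂ)) w :=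
    continuousAt_const.mul (continuousAt_neg.cpow continuousAt_const hw)
  refine hcont.congr ?_
  filter_upwards [continuousAt_neg.eventually (Complex.isOpen_slitPlane.mem_nhds hw)] with u hu
    using (ssqrt_eq_I_mul_cpow hu).symm

end SquareRoot

section BoundarySymbols

variable {n}
  {R₀ : EuclideanSpace ℝ (Fin n) → EuclideanSpace ℝ (Fin n) →L[ℝ] EuclideanSpace ℝ (Fin n)}
  {n₀ : EuclideanSpace ℝ (Fin n) → ℝ}

theorem jap_sq (ξ : EuclideanSpace ℝ (Fin n)) : jap ξ ^ 2 = 1 + ‖ξ‖ ^ 2 :=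
  Real.sq_sqrt (by positivity)

theorem one_le_jap (ξ : EuclideanSpace ℝ (Fin n)) : 1 ≤ jap ξ :=
  Real.one_le_sqrt.2 (by simp)

theorem norm_le_jap (ξ : EuclideanSpace ℝ (Fin n)) : ‖ξ‖ ≤ jap ξ :=
  Real.le_sqrt_of_sq_le (by simp)

theorem jap_pos (ξ : EuclideanSpace ℝ (Fin n)) : 0 < jap ξ :=
  one_pos.trans_le (one_le_jap ξ)

/-- Uniform ellipticity of the quadratic form `r₀`. -/
def IsUniformlyElliptic
    (R₀ : EuclideanSpace ℝ (Fin n) → EuclideanSpace ℝ (Fin n) →L[ℝ] EuclideanSpace ℝ (Fin n)) :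
    Prop :=
  ∃ c : ℝ, 0 < c ∧ ∀ x ξ, c * ‖ξ‖ ^ 2 ≤ inner ℝ (R₀ x ξ) ξ

theorem IsUniformlyElliptic.rZero_nonneg (h : IsUniformlyElliptic R₀) (p : PhaseSpace n) :
    0 ≤ rZero n R₀ p := by
  obtain ⟨c, hc, h⟩ := h
  exact (by positivity : 0 ≤ c * ‖p.2‖ ^ 2).trans (h p.1 p.2)

theorem IsUniformlyElliptic.norm_sq_isBigO (h : IsUniformlyElliptic R₀)
    (l : Filter (PhaseSpace n)) :
    (fun p : PhaseSpace n => ‖p.2‖ ^ 2) =O[l] rZero n R₀ := by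
  have h0 := h.rZero_nonneg
  obtain ⟨c, hc, h⟩ := h
  refine .of_bound c⁻¹ (.of_forall fun p => ?_)
  rw [Real.norm_of_nonneg (by positivity), Real.norm_of_nonneg (h0 p), ← div_eq_inv_mul,
    le_div_iff₀' hc]
  exact h p.1 p.2

theorem continuous_rZero (hR₀ : Continuous R₀) : Continuous (rZero n R₀) := by
  unfold rZero
  fun_prop

theorem rho_sq (z : ℂ) (p : PhaseSpace n) :
    rho n R₀ n₀ z p ^ 2 = -(rZero n R₀ p : ℂ) + z * n₀ p.1 :=
  ssqrt_sq _

theorem neg_neg_add_mul_mem_slitPlane {z : ℂ} (hz : -z ∈ Complex.slitPlane) {r m : ℝ}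
    (hr : 0 ≤ r) (hm : 0 < m) : -(-(r : ℂ) + z * m) ∈ Complex.slitPlane := by
  rw [Complex.mem_slitPlane_iff] at hz ⊢
  refine hz.imp (fun hre => ?_) fun him => ?_
  · have hre' : (-(-(r : ℂ) + z * m)).re = r + (-z).re * m := by
      simp [add_comm]
    exact hre' ▸ add_pos_of_nonneg_of_pos hr (mul_pos hre hm)
  · simpa [hm.ne'] using him

theorem rho_ne_zero (hell : IsUniformlyElliptic R₀) (hn₀ : ∀ x, 0 < n₀ x) {z : ℂ}
    (hz : -z ∈ Complex.slitPlane) (p : PhaseSpace n) : rho n R₀ n₀ z p ≠ 0 := by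
  intro h
  have hmem := neg_neg_add_mul_mem_slitPlane hz (hell.rZero_nonneg p) (hn₀ p.1)
  rw [← rho_sq, h] at hmem
  exact Complex.slitPlane_ne_zero hmem (by simp)

theorem continuous_rho (hR₀ : Continuous R₀) (hell : IsUniformlyElliptic R₀)
    (hn₀ : Continuous n₀) (hpos : ∀ x, 0 < n₀ x) {z : ℂ} (hz : -z ∈ Complex.slitPlane) :
    Continuous (rho n R₀ n₀ z) := by
  have hr := continuous_rZero hR₀
  rw [continuous_iff_continuousAt]
  exact fun p => ContinuousAt.comp (g := ssqrt)
    (continuousAt_ssqrt (neg_neg_add_mul_mem_slitPlane hz (hell.rZero_nonneg p) (hpos p.1)))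
    (f := fun p : PhaseSpace n => -(rZero n R₀ p : ℂ) + z * n₀ p.1)
    (Continuous.continuousAt (by fun_prop))

variable {ι : Type*} {l : Filter ι} {z : ι → ℂ} {p : ι → PhaseSpace n} {s t T : ι → ℝ}

theorem HasBoundedDerivs.jetIsBigO_fst {F : Type*} [NormedAddCommGroup F] [NormedSpace ℝ F]
    {f : EuclideanSpace ℝ (Fin n) → F} (hf : HasBoundedDerivs f) (hs : s =O[l] (1 : ι → ℝ)) :
    JetIsBigO l (fun i y => f (p i + dilation (s i) (t i) y).1) 0 1 := by
  let π₁ := ContinuousLinearMap.fst ℝ (EuclideanSpace ℝ (Fin n)) (EuclideanSpace ℝ (Fin n))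
  have hL : (fun i => s i • π₁) =O[l] s :=
    .of_bound ‖π₁‖ (.of_forall fun i => by rw [norm_smul, mul_comm])
  exact (hf.jetIsBigO l fun i => (p i).1).comp_add_clm (hL.trans hs)

theorem jetIsBigO_rZero (hR₀ : HasBoundedDerivs R₀) (hp : (fun i => (p i).2) =O[l] T)
    (hs : s =O[l] (1 : ι → ℝ)) (ht : t =O[l] T) :
    JetIsBigO l (fun i y => rZero n R₀ (p i + dilation (s i) (t i) y)) 0 (T ^ 2) := by
  have hξ : JetIsBigO l (fun i y => (p i + dilation (s i) (t i) y).2) 0 T := by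
    have hsnd := (JetIsBigO.const (D := PhaseSpace n) ht).bilinear_apply
      (ContinuousLinearMap.lsmul ℝ ℝ)
      (JetIsBigO.of_contDiffAt (x := 0) contDiff_snd.contDiffAt (.of_forall fun _ => rfl))
    rw [mul_one] at hsnd
    exact (JetIsBigO.const hp).add hsnd
  have hRξ := (hR₀.jetIsBigO_fst (p := p) (t := t) hs).bilinear_apply
    (ContinuousLinearMap.id ℝ (EuclideanSpace ℝ (Fin n) →L[ℝ] EuclideanSpace ℝ (Fin n))) hξ
  rw [one_mul] at hRξ
  rw [sq]
  exact hRξ.bilinear_apply (innerSL ℝ) hξ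

theorem jetIsBigO_mul_potential (hn₀ : HasBoundedDerivs n₀) (hz : z =O[l] (1 : ι → ℝ))
    (hs : s =O[l] (1 : ι → ℝ)) :
    JetIsBigO l (fun i y => z i * (n₀ (p i + dilation (s i) (t i) y).1 : ℂ)) 0 1 := by
  rw [← one_mul (1 : ι → ℝ)]
  exact (JetIsBigO.const hz).mul ((hn₀.jetIsBigO_fst hs).clm_apply Complex.ofRealCLM)

theorem jetIsBigO_rho_sq (hR₀ : HasBoundedDerivs R₀) (hn₀ : HasBoundedDerivs n₀)
    (hz : z =O[l] (1 : ι → ℝ)) (hp : (fun i => (p i).2) =O[l] T) (hs : s =O[l] (1 : ι → ℝ))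
    (ht : t =O[l] T) (hT : (1 : ι → ℝ) =O[l] T) :
    JetIsBigO l (fun i y => rho n R₀ n₀ (z i) (p i + dilation (s i) (t i) y) ^ 2) 0 (T ^ 2) := by
  simp only [rho_sq]
  have hT2 : (1 : ι → ℝ) =O[l] (T ^ 2) := by simpa using! hT.pow 2
  exact ((jetIsBigO_rZero hR₀ hp hs ht).clm_apply (-Complex.ofRealCLM)).add
    ((jetIsBigO_mul_potential hn₀ hz hs).trans_isBigO hT2)

/-- The cutoff `η = φ₀(r₀/δ₀)` localizing near `ξ' = 0`, complex valued. -/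
def glancingCutoff (φ₀ : ℝ → ℝ) (δ₀ : ℝ)
    (R₀ : EuclideanSpace ℝ (Fin n) → EuclideanSpace ℝ (Fin n) →L[ℝ] EuclideanSpace ℝ (Fin n))
    (p : PhaseSpace n) : ℂ :=
  φ₀ (rZero n R₀ p / δ₀)

variable {φ₀ : ℝ → ℝ} {δ₀ : ℝ}

theorem glancingCutoff_eventuallyEq_zero (hR₀ : Continuous R₀) (hδ₀ : 0 < δ₀)
    (hzero : ∀ t, 2 ≤ |t| → φ₀ t = 0) {q : PhaseSpace n} (hq : 2 * δ₀ < rZero n R₀ q) :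
    glancingCutoff φ₀ δ₀ R₀ =ᶠ[𝓝 q] 0 := by
  filter_upwards [(continuous_rZero hR₀).continuousAt.eventually_const_lt hq] with y hy
  have h2 : 2 ≤ |rZero n R₀ y / δ₀| := ((le_div_iff₀ hδ₀).2 hy.le).trans (le_abs_self _)
  simp [glancingCutoff, hzero _ h2]

theorem glancingCutoff_eventuallyEq_one (hR₀ : Continuous R₀) (hell : IsUniformlyElliptic R₀)
    (hδ₀ : 0 < δ₀) (hone : ∀ t, |t| ≤ 1 → φ₀ t = 1) {q : PhaseSpace n}
    (hq : rZero n R₀ q < δ₀) : glancingCutoff φ₀ δ₀ R₀ =ᶠ[𝓝 q] 1 := by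
  filter_upwards [(continuous_rZero hR₀).continuousAt.eventually_lt_const hq] with y hy
  have h1 : |rZero n R₀ y / δ₀| ≤ 1 := by
    rw [abs_of_nonneg (div_nonneg (hell.rZero_nonneg y) hδ₀.le)]
    exact (div_le_one hδ₀).2 hy.le
  simp [glancingCutoff, hone _ h1]

theorem IsUniformlyElliptic.snd_isBigO_one (hell : IsUniformlyElliptic R₀) {C : ℝ}
    (hp : ∀ᶠ i in l, rZero n R₀ (p i) ≤ C) : (fun i => (p i).2) =O[l] (1 : ι → ℝ) := by
  have hr : (fun i => rZero n R₀ (p i)) =O[l] (1 : ι → ℝ) :=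
    .of_bound C (hp.mono fun i hi => by
      simpa [abs_of_nonneg (hell.rZero_nonneg (p i))] using hi)
  refine IsBigO.of_norm_left (IsBigO.of_pow two_ne_zero ?_)
  rw [one_pow]
  exact ((hell.norm_sq_isBigO ⊤).comp_tendsto tendsto_top).trans hr

theorem jetIsBigO_glancingCutoff (hR₀ : HasBoundedDerivs R₀) (hell : IsUniformlyElliptic R₀)
    (hδ₀ : 0 < δ₀) (hφ₀ : HasBoundedDerivs φ₀) (hzero : ∀ t, 2 ≤ |t| → φ₀ t = 0)
    (hs : s =O[l] (1 : ι → ℝ))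
    (ht : t =O[l ⊓ 𝓟 {i | rZero n R₀ (p i) ≤ 2 * δ₀}] (1 : ι → ℝ)) :
    JetIsBigO l (fun i y => glancingCutoff φ₀ δ₀ R₀ (p i + dilation (s i) (t i) y)) 0 1 := by
  set A : Set ι := {i | rZero n R₀ (p i) ≤ 2 * δ₀}
  have hnear : JetIsBigO (l ⊓ 𝓟 A)
      (fun i y => glancingCutoff φ₀ δ₀ R₀ (p i + dilation (s i) (t i) y)) 0 1 := by
    have hξ : (fun i => (p i).2) =O[l ⊓ 𝓟 A] (1 : ι → ℝ) :=
      hell.snd_isBigO_one (eventually_inf_principal.2 (.of_forall fun _ => id))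
    have hr := jetIsBigO_rZero hR₀ hξ (hs.mono inf_le_left) ht
    have hφ := (hφ₀.jetIsBigO _ _).comp
      ((one_pow (M := ι → ℝ) 2 ▸ hr).clm_apply (δ₀⁻¹ • ContinuousLinearMap.id ℝ ℝ))
    simpa [glancingCutoff, div_eq_inv_mul] using! hφ.clm_apply Complex.ofRealCLM
  have hfar : JetIsBigO (l ⊓ 𝓟 Aᶜ)
      (fun i y => glancingCutoff φ₀ δ₀ R₀ (p i + dilation (s i) (t i) y)) 0 1 := by
    refine (JetIsBigO.const (isBigO_zero _ _)).congr (mem_inf_of_right fun i hi => ?_)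
    exact (glancingCutoff_eventuallyEq_zero hR₀.contDiff.continuous hδ₀ hzero
      (not_le.1 hi)).comp_tendsto (tendsto_add_dilation _)
  simpa [← inf_sup_left] using hnear.sup hfar

/-- The points `(z, p)` near the glancing set, `r₀ p ≤ δ`, with `z` in `Z`. -/
def glancingRegion
    (R₀ : EuclideanSpace ℝ (Fin n) → EuclideanSpace ℝ (Fin n) →L[ℝ] EuclideanSpace ℝ (Fin n))
    (Z : Set ℂ) (δ : ℝ) : Set (ℂ × PhaseSpace n) :=
  Z ×ˢ {p | rZero n R₀ p ≤ δ}

/-- The points `(z, p)` where `ρ` is elliptic, `δ ≤ r₀ p`, with `z` in `Z`. -/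
def ellipticRegion
    (R₀ : EuclideanSpace ℝ (Fin n) → EuclideanSpace ℝ (Fin n) →L[ℝ] EuclideanSpace ℝ (Fin n))
    (Z : Set ℂ) (δ : ℝ) : Set (ℂ × PhaseSpace n) :=
  Z ×ˢ {p | δ ≤ rZero n R₀ p}

variable {Z : Set ℂ} {δ : ℝ}

theorem isBigO_fst_one (hZ : Bornology.IsBounded Z) (S : Set (PhaseSpace n)) :
    (fun i : ℂ × PhaseSpace n => i.1) =O[𝓟 (Z ×ˢ S)] (1 : ℂ × PhaseSpace n → ℝ) := by
  obtain ⟨C, hC⟩ := hZ.exists_norm_le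
  exact .of_bound C (eventually_principal.2 fun i hi => by simpa using hC i.1 hi.1)

theorem rho_isBigO_one (hR₀ : HasBoundedDerivs R₀) (hell : IsUniformlyElliptic R₀)
    (hn₀ : HasBoundedDerivs n₀) (hZ : Bornology.IsBounded Z) :
    (fun i => rho n R₀ n₀ i.1 i.2) =O[𝓟 (glancingRegion R₀ Z δ)]
      (1 : ℂ × PhaseSpace n → ℝ) := by
  have hone := isBigO_refl (1 : ℂ × PhaseSpace n → ℝ) (𝓟 (glancingRegion R₀ Z δ))
  have hξ : (fun i => i.2.2) =O[𝓟 (glancingRegion R₀ Z δ)] (1 : ℂ × PhaseSpace n → ℝ) :=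
    hell.snd_isBigO_one (eventually_principal.2 fun i hi => hi.2)
  refine IsBigO.of_pow two_ne_zero ?_
  simpa using! (jetIsBigO_rho_sq hR₀ hn₀ (isBigO_fst_one hZ _) hξ hone hone hone).value_isBigO

theorem jetIsBigO_rho_glancing (hR₀ : HasBoundedDerivs R₀) (hell : IsUniformlyElliptic R₀)
    (hn₀ : HasBoundedDerivs n₀) (hpos : ∀ x, 0 < n₀ x) (hZ : Bornology.IsBounded Z)
    (hslit : ∀ z ∈ Z, -z ∈ Complex.slitPlane) :
    JetIsBigO (𝓟 (glancingRegion R₀ Z δ))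
      (fun i y => rho n R₀ n₀ i.1
        (i.2 + dilation (‖rho n R₀ n₀ i.1 i.2‖ ^ 2) (‖rho n R₀ n₀ i.1 i.2‖ ^ 2) y)) 0
      fun i => ‖rho n R₀ n₀ i.1 i.2‖ := by
  set l := 𝓟 (glancingRegion R₀ Z δ)
  set m : ℂ × PhaseSpace n → ℝ := fun i => ‖rho n R₀ n₀ i.1 i.2‖
  have hone : (1 : ℂ × PhaseSpace n → ℝ) =O[l] (1 : ℂ × PhaseSpace n → ℝ) := isBigO_refl _ _
  have hξ : (fun i : ℂ × PhaseSpace n => i.2.2) =O[l] (1 : ℂ × PhaseSpace n → ℝ) :=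
    hell.snd_isBigO_one (eventually_principal.2 fun i hi => hi.2)
  have hρsq := jetIsBigO_rho_sq hR₀ hn₀ (isBigO_fst_one hZ _) hξ hone hone hone
  have hm2 : (m ^ 2) =O[l] (1 : ℂ × PhaseSpace n → ℝ) := by
    rw [← one_pow (M := ℂ × PhaseSpace n → ℝ) 2]
    exact (rho_isBigO_one hR₀ hell hn₀ hZ).norm_left.pow 2
  have hρsq' : JetIsBigO l (fun i y => rho n R₀ n₀ i.1 (i.2 + dilation (m i ^ 2) (m i ^ 2) y) ^ 2)
      0 (m ^ 2) := by
    refine ((one_pow (M := ℂ × PhaseSpace n → ℝ) 2 ▸ hρsq).dilate hm2 ?_).congr ?_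
    · exact isBigO_of_le _ fun i => by simp [m]
    · exact .of_forall fun i => .of_forall fun y => by
        simp [dilation_apply, m, Prod.smul_def]
  refine hρsq'.sqrt (isBigO_of_le _ fun i => by simp [m]) ?_ ?_
    (.of_forall fun i => .of_forall fun y => rfl)
  · exact eventually_principal.2 fun i hi =>
      norm_ne_zero_iff.2 (rho_ne_zero hell hpos (hslit _ hi.1) _)
  · refine eventually_principal.2 fun i hi => ?_
    have := continuous_rho hR₀.contDiff.continuous hell hn₀.contDiff.continuous hpos
      (hslit _ hi.1)
    exact Continuous.continuousAt (by fun_prop)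

theorem jetIsBigO_rho_elliptic (hR₀ : HasBoundedDerivs R₀) (hell : IsUniformlyElliptic R₀)
    (hn₀ : HasBoundedDerivs n₀) (hpos : ∀ x, 0 < n₀ x) (hZ : Bornology.IsBounded Z)
    (hslit : ∀ z ∈ Z, -z ∈ Complex.slitPlane)
    (hρ : (fun i => jap i.2.2) =O[𝓟 (ellipticRegion R₀ Z δ)] fun i => rho n R₀ n₀ i.1 i.2) :
    JetIsBigO (𝓟 (ellipticRegion R₀ Z δ))
      (fun i y => rho n R₀ n₀ i.1 (i.2 + dilation 1 (jap i.2.2) y)) 0 fun i => jap i.2.2 := by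
  have hξ : (fun i : ℂ × PhaseSpace n => i.2.2) =O[𝓟 (ellipticRegion R₀ Z δ)]
      fun i => jap i.2.2 :=
    isBigO_of_le _ fun i => (norm_le_jap _).trans (le_abs_self _)
  have hone : (1 : ℂ × PhaseSpace n → ℝ) =O[𝓟 (ellipticRegion R₀ Z δ)] fun i => jap i.2.2 :=
    isBigO_of_le _ fun i => by simpa using (one_le_jap _).trans (le_abs_self _)
  have hρsq := jetIsBigO_rho_sq hR₀ hn₀ (isBigO_fst_one hZ _) hξ (isBigO_refl 1 _)
    (isBigO_refl _ _) hone
  refine hρsq.sqrt (by simpa using! hρ) ?_ ?_ (.of_forall fun i => .of_forall fun y => rfl)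
  · exact .of_forall fun i => (jap_pos _).ne'
  · refine eventually_principal.2 fun i hi => ?_
    have := continuous_rho hR₀.contDiff.continuous hell hn₀.contDiff.continuous hpos
      (hslit _ hi.1)
    exact Continuous.continuousAt (by fun_prop)

theorem isSymbolOn_glancingCutoff_mul_zpow {f : ℂ → PhaseSpace n → ℂ}
    {m : ℂ × PhaseSpace n → ℝ} (hR₀ : HasBoundedDerivs R₀)
    (hell : IsUniformlyElliptic R₀) (hδ₀ : 0 < δ₀) (hφ₀ : HasBoundedDerivs φ₀)
    (hzero : ∀ t, 2 ≤ |t| → φ₀ t = 0) (hm0 : ∀ i ∈ glancingRegion R₀ Z (2 * δ₀), 0 < m i)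
    (hmnn : ∀ i, 0 ≤ m i)
    (hm : m =O[𝓟 (glancingRegion R₀ Z (2 * δ₀))] (1 : ℂ × PhaseSpace n → ℝ))
    (hf : JetIsBigO (𝓟 (glancingRegion R₀ Z (2 * δ₀)))
      (fun i y => f i.1 (i.2 + dilation (m i ^ 2) (m i ^ 2) y)) 0 m)
    (hmf : m =O[𝓟 (glancingRegion R₀ Z (2 * δ₀))] fun i => f i.1 i.2) (k : ℤ) :
    IsSymbolOn (Z ×ˢ Set.univ) m k 2 2 fun z q => glancingCutoff φ₀ δ₀ R₀ q * f z q ^ k := by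
  have hm2 : (fun i => m i ^ 2) =O[𝓟 (glancingRegion R₀ Z (2 * δ₀))]
      (1 : ℂ × PhaseSpace n → ℝ) := by
    rw [← one_pow (M := ℂ × PhaseSpace n → ℝ) 2]
    exact hm.pow 2
  have hη := jetIsBigO_glancingCutoff (p := fun i : ℂ × PhaseSpace n => i.2) hR₀ hell hδ₀ hφ₀
    hzero hm2 (hm2.mono inf_le_left)
  have hsymbol := IsSymbolOn.of_jetIsBigO_mul_zpow (δ₁ := 2) (δ₂ := 2) (χ := fun _ => _) hm0
    (by simpa using! hη) (by simpa using! hf) hmf k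
  refine hsymbol.of_eventuallyEq_zero hmnn fun i hi hi' => ?_
  have hfar : 2 * δ₀ < rZero n R₀ i.2 := not_le.1 fun h => hi' ⟨hi.1, h⟩
  filter_upwards [glancingCutoff_eventuallyEq_zero hR₀.contDiff.continuous hδ₀ hzero hfar]
    with q hq
  simp [hq]

theorem IsUniformlyElliptic.jap_isBigO_one (hell : IsUniformlyElliptic R₀) {C : ℝ}
    (hp : ∀ᶠ i in l, rZero n R₀ (p i) ≤ C) : (fun i => jap (p i).2) =O[l] (1 : ι → ℝ) := by
  refine IsBigO.of_pow two_ne_zero ?_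
  have hsq := ((isBigO_refl (1 : ι → ℝ) l).pow 2).add ((hell.snd_isBigO_one hp).norm_left.pow 2)
  exact hsq.congr_left fun i => by simp [jap_sq]

theorem jetIsBigO_one_sub_glancingCutoff (hR₀ : HasBoundedDerivs R₀)
    (hell : IsUniformlyElliptic R₀) (hδ₀ : 0 < δ₀) (hφ₀ : HasBoundedDerivs φ₀)
    (hzero : ∀ t, 2 ≤ |t| → φ₀ t = 0) :
    JetIsBigO l (fun i y => 1 - glancingCutoff φ₀ δ₀ R₀ (p i + dilation 1 (jap (p i).2) y)) 0 1 :=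
  (JetIsBigO.const (isBigO_const_const 1 one_ne_zero _)).sub
    (jetIsBigO_glancingCutoff hR₀ hell hδ₀ hφ₀ hzero (isBigO_refl _ _)
      (hell.jap_isBigO_one (eventually_inf_principal.2 (.of_forall fun _ => id))))

theorem IsSymbolOn.of_ellipticRegion {g : ℂ → PhaseSpace n → ℂ} {m : ℂ × PhaseSpace n → ℝ}
    {ℓ δ₁ δ₂ : ℝ} (hR₀ : Continuous R₀) (hell : IsUniformlyElliptic R₀) (hδ₀ : 0 < δ₀)
    (hone : ∀ t, |t| ≤ 1 → φ₀ t = 1) (hm : ∀ i, 0 ≤ m i)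
    (h : IsSymbolOn (ellipticRegion R₀ Z δ₀) m ℓ δ₁ δ₂
      fun z q => (1 - glancingCutoff φ₀ δ₀ R₀ q) * g z q) :
    IsSymbolOn (Z ×ˢ Set.univ) m ℓ δ₁ δ₂ fun z q => (1 - glancingCutoff φ₀ δ₀ R₀ q) * g z q := by
  refine h.of_eventuallyEq_zero hm fun i hi hi' => ?_
  have hnear : rZero n R₀ i.2 < δ₀ := not_le.1 fun h => hi' ⟨hi.1, h⟩
  filter_upwards [glancingCutoff_eventuallyEq_one hR₀ hell hδ₀ hone hnear] with q hq
  simp [hq]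

theorem isSymbolOn_one_sub_glancingCutoff_mul_zpow {f : ℂ → PhaseSpace n → ℂ}
    (hR₀ : HasBoundedDerivs R₀) (hell : IsUniformlyElliptic R₀) (hδ₀ : 0 < δ₀)
    (hφ₀ : HasBoundedDerivs φ₀) (hzero : ∀ t, 2 ≤ |t| → φ₀ t = 0)
    (hf : JetIsBigO (𝓟 (ellipticRegion R₀ Z δ₀))
      (fun i y => f i.1 (i.2 + dilation 1 (jap i.2.2) y)) 0 fun i => jap i.2.2)
    (hjf : (fun i => jap i.2.2) =O[𝓟 (ellipticRegion R₀ Z δ₀)] fun i => f i.1 i.2) (k : ℤ) :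
    IsSymbolOn (ellipticRegion R₀ Z δ₀) (fun i => jap i.2.2) k 0 1
      fun z q => (1 - glancingCutoff φ₀ δ₀ R₀ q) * f z q ^ k := by
  have hη := jetIsBigO_one_sub_glancingCutoff (l := 𝓟 (ellipticRegion R₀ Z δ₀))
    (p := fun i => i.2) hR₀ hell hδ₀ hφ₀ hzero
  exact .of_jetIsBigO_mul_zpow (χ := fun _ q => 1 - glancingCutoff φ₀ δ₀ R₀ q)
    (fun i _ => jap_pos _) (by simpa using! hη) (by simpa using! hf) hjf k

/-- The principal symbol `i√r₀` of `ρ` in the elliptic region. -/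
def ellipticRoot
    (R₀ : EuclideanSpace ℝ (Fin n) → EuclideanSpace ℝ (Fin n) →L[ℝ] EuclideanSpace ℝ (Fin n))
    (p : PhaseSpace n) : ℂ :=
  Complex.I * (Real.sqrt (rZero n R₀ p) : ℂ)

theorem IsUniformlyElliptic.ellipticRoot_sq (hell : IsUniformlyElliptic R₀) (p : PhaseSpace n) :
    ellipticRoot R₀ p ^ 2 = -(rZero n R₀ p : ℂ) := by
  rw [ellipticRoot, mul_pow, Complex.I_sq, ← Complex.ofReal_pow,
    Real.sq_sqrt (hell.rZero_nonneg p), neg_one_mul]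

theorem IsUniformlyElliptic.jap_isBigO_ellipticRoot (hell : IsUniformlyElliptic R₀) (hδ : 0 < δ) :
    (fun i => jap i.2.2) =O[𝓟 (ellipticRegion R₀ Z δ)] fun i => ellipticRoot R₀ i.2 := by
  have hone : (fun _ => (1 : ℝ)) =O[𝓟 (ellipticRegion R₀ Z δ)] fun i => rZero n R₀ i.2 := by
    refine .of_bound δ⁻¹ (eventually_principal.2 fun i hi => ?_)
    rw [norm_one, Real.norm_of_nonneg (hell.rZero_nonneg _), ← div_eq_inv_mul, one_le_div₀ hδ]
    exact hi.2
  have hξ : (fun i => ‖i.2.2‖ ^ 2) =O[𝓟 (ellipticRegion R₀ Z δ)] fun i => rZero n R₀ i.2 :=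
    (hell.norm_sq_isBigO ⊤).comp_tendsto tendsto_top
  refine IsBigO.of_pow two_ne_zero ?_
  refine ((hone.add hξ).congr_left fun i => (jap_sq _).symm).trans (isBigO_of_le _ fun i => ?_)
  simp [hell.ellipticRoot_sq]

theorem jetIsBigO_ellipticRoot (hR₀ : HasBoundedDerivs R₀) (hell : IsUniformlyElliptic R₀)
    (hδ : 0 < δ) : JetIsBigO (𝓟 (ellipticRegion R₀ Z δ))
      (fun i y => ellipticRoot R₀ (i.2 + dilation 1 (jap i.2.2) y)) 0 fun i => jap i.2.2 := by
  have hξ : (fun i : ℂ × PhaseSpace n => i.2.2) =O[𝓟 (ellipticRegion R₀ Z δ)]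
      fun i => jap i.2.2 :=
    isBigO_of_le _ fun i => (norm_le_jap _).trans (le_abs_self _)
  have hsq := (jetIsBigO_rZero hR₀ hξ (isBigO_refl 1 _) (isBigO_refl _ _)).clm_apply
    (-Complex.ofRealCLM)
  refine hsq.sqrt (by simpa using! hell.jap_isBigO_ellipticRoot hδ)
    (.of_forall fun i => (jap_pos _).ne') (.of_forall fun i => ?_)
    (.of_forall fun i => .of_forall fun y => hell.ellipticRoot_sq _)
  have := continuous_rZero hR₀.contDiff.continuous
  unfold ellipticRoot
  exact Continuous.continuousAt (by fun_prop)

theorem norm_ellipticRoot_le_norm_rho_add (z : ℂ) (p : PhaseSpace n) :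
    ‖ellipticRoot R₀ p‖ ≤ ‖rho n R₀ n₀ z p + ellipticRoot R₀ p‖ := by
  have him : (rho n R₀ n₀ z p + ellipticRoot R₀ p).im =
      (rho n R₀ n₀ z p).im + Real.sqrt (rZero n R₀ p) := by
    simp [ellipticRoot]
  calc
    ‖ellipticRoot R₀ p‖ = Real.sqrt (rZero n R₀ p) := by
      simp [ellipticRoot, abs_of_nonneg (Real.sqrt_nonneg _)]
    _ ≤ (rho n R₀ n₀ z p).im + Real.sqrt (rZero n R₀ p) :=
      le_add_of_nonneg_left (ssqrt_im_nonneg _)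
    _ ≤ _ := him ▸ (le_abs_self _).trans (Complex.abs_im_le_norm _)

theorem IsUniformlyElliptic.rho_sub_ellipticRoot (hell : IsUniformlyElliptic R₀) {z : ℂ}
    {p : PhaseSpace n} (h : rho n R₀ n₀ z p + ellipticRoot R₀ p ≠ 0) :
    rho n R₀ n₀ z p - ellipticRoot R₀ p =
      z * n₀ p.1 * (rho n R₀ n₀ z p + ellipticRoot R₀ p)⁻¹ := by
  rw [eq_mul_inv_iff_mul_eq₀ h]
  linear_combination rho_sq (n := n) (R₀ := R₀) (n₀ := n₀) z p - hell.ellipticRoot_sq p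

theorem jetIsBigO_rho_sub_ellipticRoot (hR₀ : HasBoundedDerivs R₀)
    (hell : IsUniformlyElliptic R₀) (hn₀ : HasBoundedDerivs n₀) (hZ : Bornology.IsBounded Z)
    (hδ : 0 < δ) (hρ : JetIsBigO (𝓟 (ellipticRegion R₀ Z δ))
      (fun i y => rho n R₀ n₀ i.1 (i.2 + dilation 1 (jap i.2.2) y)) 0 fun i => jap i.2.2) :
    JetIsBigO (𝓟 (ellipticRegion R₀ Z δ))
      ((fun i y => rho n R₀ n₀ i.1 (i.2 + dilation 1 (jap i.2.2) y)) -
        fun i y => ellipticRoot R₀ (i.2 + dilation 1 (jap i.2.2) y)) 0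
      (fun i => jap i.2.2)⁻¹ := by
  have hsum := hρ.add (jetIsBigO_ellipticRoot hR₀ hell hδ)
  have hjap : (fun i => jap i.2.2) =O[𝓟 (ellipticRegion R₀ Z δ)]
      fun i => rho n R₀ n₀ i.1 i.2 + ellipticRoot R₀ i.2 :=
    (hell.jap_isBigO_ellipticRoot hδ).trans
      (isBigO_of_le _ fun i => norm_ellipticRoot_le_norm_rho_add i.1 i.2)
  have hjap0 : ∀ᶠ i in 𝓟 (ellipticRegion R₀ Z δ), jap i.2.2 ≠ 0 :=
    .of_forall fun i => (jap_pos _).ne'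
  have hquot := (jetIsBigO_mul_potential (p := fun i => i.2) (t := fun i => jap i.2.2) hn₀
    (isBigO_fst_one hZ _) (isBigO_refl 1 _)).mul (hsum.inv (by simpa using! hjap) hjap0)
  rw [one_mul] at hquot
  refine hquot.congr ?_
  filter_upwards [hsum.eventually_ne_zero (by simpa using! hjap) hjap0] with i hi
  exact hi.mono fun y hy => hell.rho_sub_ellipticRoot hy

theorem isSymbolOn_rho_zpow_sub_ellipticRoot_zpow (hR₀ : HasBoundedDerivs R₀)
    (hell : IsUniformlyElliptic R₀) (hn₀ : HasBoundedDerivs n₀) (hpos : ∀ x, 0 < n₀ x)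
    (hZ : Bornology.IsBounded Z) (hslit : ∀ z ∈ Z, -z ∈ Complex.slitPlane) (hδ₀ : 0 < δ₀)
    (hφ₀ : HasBoundedDerivs φ₀) (hone : ∀ t, |t| ≤ 1 → φ₀ t = 1)
    (hzero : ∀ t, 2 ≤ |t| → φ₀ t = 0)
    (hjρ : (fun i => jap i.2.2) =O[𝓟 (ellipticRegion R₀ Z δ₀)] fun i => rho n R₀ n₀ i.1 i.2)
    (k : ℤ) :
    IsSymbolOn (Z ×ˢ Set.univ) (fun i => jap i.2.2) (k - 2) 0 1 fun z q =>
      (1 - glancingCutoff φ₀ δ₀ R₀ q) * (rho n R₀ n₀ z q ^ k - ellipticRoot R₀ q ^ k) := by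
  have hη := jetIsBigO_one_sub_glancingCutoff (l := 𝓟 (ellipticRegion R₀ Z δ₀))
    (p := fun i => i.2) hR₀ hell hδ₀ hφ₀ hzero
  have hρ := jetIsBigO_rho_elliptic hR₀ hell hn₀ hpos hZ hslit hjρ
  have hdiff := hρ.zpow_sub_zpow (by simpa using! hjρ) (jetIsBigO_ellipticRoot hR₀ hell hδ₀)
    (by simpa using! hell.jap_isBigO_ellipticRoot hδ₀) (.of_forall fun i => (jap_pos _).ne')
    (jetIsBigO_rho_sub_ellipticRoot hR₀ hell hn₀ hZ hδ₀ hρ) k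
  have hweight : ∀ i : ℂ × PhaseSpace n,
      jap i.2.2 ^ (k - 1) * (jap i.2.2)⁻¹ = jap i.2.2 ^ ((k : ℝ) - 2) := fun i => by
    rw [← zpow_sub_one₀ (jap_pos _).ne', ← Real.rpow_intCast]
    push_cast
    ring_nf
  refine .of_ellipticRegion hR₀.contDiff.continuous hell hδ₀ hone (fun i => (jap_pos _).le)
    (.of_jetIsBigO (fun i _ => jap_pos _) ?_)
  simp only [Real.rpow_zero, Real.rpow_one, ← hweight]
  simpa using! hη.mul hdiff

theorem isSymbolOn_zpow_of_norm_eq_norm_rho {f : ℂ → PhaseSpace n → ℂ} (hR₀ : HasBoundedDerivs R₀)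
    (hell : IsUniformlyElliptic R₀) (hn₀ : HasBoundedDerivs n₀) (hpos : ∀ x, 0 < n₀ x)
    (hZ : Bornology.IsBounded Z) (hslit : ∀ z ∈ Z, -z ∈ Complex.slitPlane)
    (hδ₀ : 0 < δ₀) (hφ₀ : HasBoundedDerivs φ₀) (hone : ∀ t, |t| ≤ 1 → φ₀ t = 1)
    (hzero : ∀ t, 2 ≤ |t| → φ₀ t = 0) (hfρ : ∀ z p, ‖f z p‖ = ‖rho n R₀ n₀ z p‖)
    (hglanc : JetIsBigO (𝓟 (glancingRegion R₀ Z (2 * δ₀)))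
      (fun i y => f i.1 (i.2 +
        dilation (‖rho n R₀ n₀ i.1 i.2‖ ^ 2) (‖rho n R₀ n₀ i.1 i.2‖ ^ 2) y)) 0
      fun i => ‖rho n R₀ n₀ i.1 i.2‖)
    (hellip : JetIsBigO (𝓟 (ellipticRegion R₀ Z δ₀))
      (fun i y => f i.1 (i.2 + dilation 1 (jap i.2.2) y)) 0 fun i => jap i.2.2)
    (hjρ : (fun i => jap i.2.2) =O[𝓟 (ellipticRegion R₀ Z δ₀)] fun i => rho n R₀ n₀ i.1 i.2)
    (k : ℤ) :
    IsSymbolOn (Z ×ˢ Set.univ) (fun i => ‖rho n R₀ n₀ i.1 i.2‖) k 2 2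
        (fun z q => glancingCutoff φ₀ δ₀ R₀ q * f z q ^ k) ∧
      IsSymbolOn (Z ×ˢ Set.univ) (fun i => ‖rho n R₀ n₀ i.1 i.2‖) k 0 1
        (fun z q => (1 - glancingCutoff φ₀ δ₀ R₀ q) * f z q ^ k) ∧
      IsSymbolOn (Z ×ˢ Set.univ) (fun i => jap i.2.2) k 0 1
        (fun z q => (1 - glancingCutoff φ₀ δ₀ R₀ q) * f z q ^ k) := by
  have hρ0 : ∀ i : ℂ × PhaseSpace n, i.1 ∈ Z → 0 < ‖rho n R₀ n₀ i.1 i.2‖ := fun i hi =>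
    norm_pos_iff.2 (rho_ne_zero hell hpos (hslit _ hi) _)
  have hjf : (fun i => jap i.2.2) =O[𝓟 (ellipticRegion R₀ Z δ₀)] fun i => f i.1 i.2 :=
    hjρ.trans (isBigO_of_le _ fun i => (hfρ _ _).ge)
  have hfj : (fun i => f i.1 i.2) =O[𝓟 (ellipticRegion R₀ Z δ₀)] fun i => jap i.2.2 := by
    simpa using! hellip.value_isBigO
  have hweight : (fun i => jap i.2.2) =Θ[𝓟 (ellipticRegion R₀ Z δ₀)]
      fun i => ‖rho n R₀ n₀ i.1 i.2‖ :=
    ⟨hjρ.norm_right, (isBigO_of_le _ fun i => by simp [hfρ]).trans hfj⟩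
  have hsymbol := isSymbolOn_one_sub_glancingCutoff_mul_zpow hR₀ hell hδ₀ hφ₀ hzero hellip hjf k
  refine ⟨?_, ?_, ?_⟩
  · exact isSymbolOn_glancingCutoff_mul_zpow hR₀ hell hδ₀ hφ₀ hzero (fun i hi => hρ0 i hi.1)
      (fun i => norm_nonneg _) (rho_isBigO_one hR₀ hell hn₀ hZ).norm_left hglanc
      (isBigO_of_le _ fun i => by simp [hfρ]) k
  · exact .of_ellipticRegion hR₀.contDiff.continuous hell hδ₀ hone (fun i => norm_nonneg _)
      (hsymbol.congr_weight (fun i _ => jap_pos _) (fun i hi => hρ0 i hi.1) hweight)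
  · exact .of_ellipticRegion hR₀.contDiff.continuous hell hδ₀ hone (fun i => (jap_pos _).le)
      hsymbol

theorem isSymbolOn_rho_zpow (hR₀ : HasBoundedDerivs R₀) (hell : IsUniformlyElliptic R₀)
    (hn₀ : HasBoundedDerivs n₀) (hpos : ∀ x, 0 < n₀ x) (hZ : Bornology.IsBounded Z)
    (hslit : ∀ z ∈ Z, -z ∈ Complex.slitPlane) (hδ₀ : 0 < δ₀) (hφ₀ : HasBoundedDerivs φ₀)
    (hone : ∀ t, |t| ≤ 1 → φ₀ t = 1) (hzero : ∀ t, 2 ≤ |t| → φ₀ t = 0)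
    (hjρ : (fun i => jap i.2.2) =O[𝓟 (ellipticRegion R₀ Z δ₀)] fun i => rho n R₀ n₀ i.1 i.2)
    (k : ℤ) :
    IsSymbolOn (Z ×ˢ Set.univ) (fun i => ‖rho n R₀ n₀ i.1 i.2‖) k 2 2
        (fun z q => glancingCutoff φ₀ δ₀ R₀ q * rho n R₀ n₀ z q ^ k) ∧
      IsSymbolOn (Z ×ˢ Set.univ) (fun i => ‖rho n R₀ n₀ i.1 i.2‖) k 0 1
        (fun z q => (1 - glancingCutoff φ₀ δ₀ R₀ q) * rho n R₀ n₀ z q ^ k) ∧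
      IsSymbolOn (Z ×ˢ Set.univ) (fun i => jap i.2.2) k 0 1
        (fun z q => (1 - glancingCutoff φ₀ δ₀ R₀ q) * rho n R₀ n₀ z q ^ k) :=
  isSymbolOn_zpow_of_norm_eq_norm_rho hR₀ hell hn₀ hpos hZ hslit hδ₀ hφ₀ hone hzero
    (fun _ _ => rfl) (jetIsBigO_rho_glancing hR₀ hell hn₀ hpos hZ hslit)
    (jetIsBigO_rho_elliptic hR₀ hell hn₀ hpos hZ hslit hjρ) hjρ k

theorem isSymbolOn_norm_rho_zpow (hR₀ : HasBoundedDerivs R₀) (hell : IsUniformlyElliptic R₀)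
    (hn₀ : HasBoundedDerivs n₀) (hpos : ∀ x, 0 < n₀ x) (hZ : Bornology.IsBounded Z)
    (hslit : ∀ z ∈ Z, -z ∈ Complex.slitPlane) (hδ₀ : 0 < δ₀) (hφ₀ : HasBoundedDerivs φ₀)
    (hone : ∀ t, |t| ≤ 1 → φ₀ t = 1) (hzero : ∀ t, 2 ≤ |t| → φ₀ t = 0)
    (hjρ : (fun i => jap i.2.2) =O[𝓟 (ellipticRegion R₀ Z δ₀)] fun i => rho n R₀ n₀ i.1 i.2)
    (k : ℤ) :
    IsSymbolOn (Z ×ˢ Set.univ) (fun i => ‖rho n R₀ n₀ i.1 i.2‖) k 2 2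
        (fun z q => glancingCutoff φ₀ δ₀ R₀ q * (‖rho n R₀ n₀ z q‖ : ℂ) ^ k) ∧
      IsSymbolOn (Z ×ˢ Set.univ) (fun i => ‖rho n R₀ n₀ i.1 i.2‖) k 0 1
        (fun z q => (1 - glancingCutoff φ₀ δ₀ R₀ q) * (‖rho n R₀ n₀ z q‖ : ℂ) ^ k) ∧
      IsSymbolOn (Z ×ˢ Set.univ) (fun i => jap i.2.2) k 0 1
        (fun z q => (1 - glancingCutoff φ₀ δ₀ R₀ q) * (‖rho n R₀ n₀ z q‖ : ℂ) ^ k) :=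
  have hρ0 : ∀ᶠ i in 𝓟 (glancingRegion R₀ Z (2 * δ₀)), ‖rho n R₀ n₀ i.1 i.2‖ ≠ 0 :=
    eventually_principal.2 fun _ hi =>
      norm_ne_zero_iff.2 (rho_ne_zero hell hpos (hslit _ hi.1) _)
  isSymbolOn_zpow_of_norm_eq_norm_rho hR₀ hell hn₀ hpos hZ hslit hδ₀ hφ₀ hone hzero
    (fun _ _ => Complex.norm_of_nonneg (norm_nonneg _))
    ((jetIsBigO_rho_glancing hR₀ hell hn₀ hpos hZ hslit).norm
      (isBigO_of_le _ fun i => by simp) hρ0)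
    ((jetIsBigO_rho_elliptic hR₀ hell hn₀ hpos hZ hslit hjρ).norm
      (by simpa using! hjρ) (.of_forall fun i => (jap_pos _).ne')) hjρ k

end BoundarySymbols

theorem isBounded_setOf_Zall : Bornology.IsBounded {z | Zall z} := by
  refine isBounded_iff_forall_norm_le.2 ⟨2, fun z hz => ?_⟩
  have hbound : |z.re| ≤ 1 ∧ |z.im| ≤ 1 := by
    rcases hz with ⟨hre, -, him⟩ | ⟨hre, him⟩ | ⟨hre, him⟩
    · exact ⟨by simp [hre], him⟩
    · exact ⟨by simp [hre], him⟩
    · exact ⟨hre, him.le⟩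
  linarith [Complex.norm_le_abs_re_add_abs_im z, hbound.1, hbound.2]

theorem neg_mem_slitPlane_of_Zall {z : ℂ} (hz : Zall z) : -z ∈ Complex.slitPlane := by
  rw [Complex.mem_slitPlane_iff, Complex.neg_re, Complex.neg_im, neg_ne_zero]
  rcases hz with ⟨-, him, -⟩ | ⟨hre, -⟩ | ⟨-, him⟩
  · exact .inr (abs_pos.1 him)
  · exact .inl (by simp [hre])
  · exact .inr (abs_pos.1 (him ▸ one_pos))

theorem statement_7_general {n : ℕ}
    {R₀ : EuclideanSpace ℝ (Fin n) → (EuclideanSpace ℝ (Fin n) →L[ℝ] EuclideanSpace ℝ (Fin n))}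
    {n₀ : EuclideanSpace ℝ (Fin n) → ℝ} {Z : Set ℂ} {φ₀ : ℝ → ℝ} {δ₀ : ℝ}
    (hR₀ : HasBoundedDerivs R₀) (hell : IsUniformlyElliptic R₀)
    (hn₀ : HasBoundedDerivs n₀) (hpos : ∀ x, 0 < n₀ x)
    (hZ : Bornology.IsBounded Z) (hslit : ∀ z ∈ Z, -z ∈ Complex.slitPlane)
    (hφ₀ : ContDiff ℝ (⊤ : ℕ∞) φ₀) (hone : ∀ t, |t| ≤ 1 → φ₀ t = 1)
    (hzero : ∀ t, 2 ≤ |t| → φ₀ t = 0) (hδ₀ : 0 < δ₀)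
    (hδ₀small : ∃ c : ℝ, 0 < c ∧ ∀ z ∈ Z, ∀ p, δ₀ ≤ rZero n R₀ p →
      c * jap p.2 ≤ ‖rho n R₀ n₀ z p‖) :
    ∀ k : ℤ,
      (∀ α β : ℕ, ∃ C : ℝ, ∀ z ∈ Z,
        ∀ (v : Fin α → EuclideanSpace ℝ (Fin n)) (w : Fin β → EuclideanSpace ℝ (Fin n)),
          (∀ i, ‖v i‖ ≤ 1) → (∀ i, ‖w i‖ ≤ 1) → ∀ p,
          (‖Dmix n (fun q => φ₀ (rZero n R₀ q / δ₀) * rho n R₀ n₀ z q ^ k) α β v w p‖ ≤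
              C * ‖rho n R₀ n₀ z p‖ ^ ((k : ℝ) - 2 * α - 2 * β) ∧
            ‖Dmix n (fun q => φ₀ (rZero n R₀ q / δ₀) * ((‖rho n R₀ n₀ z q‖ : ℂ) ^ k))
                α β v w p‖ ≤
              C * ‖rho n R₀ n₀ z p‖ ^ ((k : ℝ) - 2 * α - 2 * β)) ∧
          (‖Dmix n (fun q => (1 - φ₀ (rZero n R₀ q / δ₀)) * rho n R₀ n₀ z q ^ k)
                α β v w p‖ ≤
              C * ‖rho n R₀ n₀ z p‖ ^ ((k : ℝ) - β) ∧
            ‖Dmix n (fun q => (1 - φ₀ (rZero n R₀ q / δ₀)) * ((‖rho n R₀ n₀ z q‖ : ℂ) ^ k))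
                α β v w p‖ ≤
              C * ‖rho n R₀ n₀ z p‖ ^ ((k : ℝ) - β))) ∧
      (∀ α β : ℕ, ∃ C : ℝ, ∀ z ∈ Z,
        ∀ (v : Fin α → EuclideanSpace ℝ (Fin n)) (w : Fin β → EuclideanSpace ℝ (Fin n)),
          (∀ i, ‖v i‖ ≤ 1) → (∀ i, ‖w i‖ ≤ 1) → ∀ p,
          ‖Dmix n (fun q => (1 - φ₀ (rZero n R₀ q / δ₀)) * rho n R₀ n₀ z q ^ k)
              α β v w p‖ ≤ C * jap p.2 ^ ((k : ℝ) - β) ∧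
          ‖Dmix n (fun q => (1 - φ₀ (rZero n R₀ q / δ₀)) * ((‖rho n R₀ n₀ z q‖ : ℂ) ^ k))
              α β v w p‖ ≤ C * jap p.2 ^ ((k : ℝ) - β)) ∧
      (∀ α β : ℕ, ∃ C : ℝ, ∀ z ∈ Z,
        ∀ (v : Fin α → EuclideanSpace ℝ (Fin n)) (w : Fin β → EuclideanSpace ℝ (Fin n)),
          (∀ i, ‖v i‖ ≤ 1) → (∀ i, ‖w i‖ ≤ 1) → ∀ p,
          ‖Dmix n (fun q => (1 - φ₀ (rZero n R₀ q / δ₀)) *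
              (rho n R₀ n₀ z q ^ k -
                (Complex.I * (Real.sqrt (rZero n R₀ q) : ℂ)) ^ k)) α β v w p‖ ≤
            C * jap p.2 ^ ((k : ℝ) - 2 - β)) := by
  intro k
  have hφ₀' := hasBoundedDerivs_of_eq_zero hφ₀ hzero
  have hjρ : (fun i => jap i.2.2) =O[𝓟 (ellipticRegion R₀ Z δ₀)]
      fun i => rho n R₀ n₀ i.1 i.2 := by
    obtain ⟨c, hc, h⟩ := hδ₀small
    refine .of_bound c⁻¹ (eventually_principal.2 fun i hi => ?_)
    rw [Real.norm_of_nonneg (jap_pos _).le, ← div_eq_inv_mul, le_div_iff₀' hc]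
    exact h _ hi.1 _ hi.2
  obtain ⟨hρ₁, hρ₂, hρ₃⟩ :=
    isSymbolOn_rho_zpow hR₀ hell hn₀ hpos hZ hslit hδ₀ hφ₀' hone hzero hjρ k
  obtain ⟨hnorm₁, hnorm₂, hnorm₃⟩ :=
    isSymbolOn_norm_rho_zpow hR₀ hell hn₀ hpos hZ hslit hδ₀ hφ₀' hone hzero hjρ k
  have hdiff := isSymbolOn_rho_zpow_sub_ellipticRoot_zpow hR₀ hell hn₀ hpos hZ hslit hδ₀ hφ₀'
    hone hzero hjρ k
  have hρnn : ∀ i : ℂ × PhaseSpace n, 0 ≤ ‖rho n R₀ n₀ i.1 i.2‖ := fun i => norm_nonneg _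
  have hjnn : ∀ i : ℂ × PhaseSpace n, 0 ≤ jap i.2.2 := fun i => (jap_pos _).le
  refine ⟨fun α β => ?_, fun α β => ?_, fun α β => ?_⟩
  · obtain ⟨C, ⟨h₁, h₂⟩, h₃, h₄⟩ := (((hρ₁.eventually_bound hρnn α β).and
      (hnorm₁.eventually_bound hρnn α β)).and ((hρ₂.eventually_bound hρnn α β).and
      (hnorm₂.eventually_bound hρnn α β))).exists
    simp only [zero_mul, one_mul, sub_zero] at h₃ h₄
    exact ⟨C, fun z hz v w hv hw p =>
      ⟨⟨h₁ (z, p) ⟨hz, trivial⟩ v w hv hw, h₂ (z, p) ⟨hz, trivial⟩ v w hv hw⟩,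
        h₃ (z, p) ⟨hz, trivial⟩ v w hv hw, h₄ (z, p) ⟨hz, trivial⟩ v w hv hw⟩⟩
  · obtain ⟨C, h₁, h₂⟩ := ((hρ₃.eventually_bound hjnn α β).and
      (hnorm₃.eventually_bound hjnn α β)).exists
    simp only [zero_mul, one_mul, sub_zero] at h₁ h₂
    exact ⟨C, fun z hz v w hv hw p =>
      ⟨h₁ (z, p) ⟨hz, trivial⟩ v w hv hw, h₂ (z, p) ⟨hz, trivial⟩ v w hv hw⟩⟩
  · obtain ⟨C, h⟩ := hdiff α β
    simp only [zero_mul, one_mul, sub_zero] at h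
    exact ⟨C, fun z hz v w hv hw p => h (z, p) ⟨hz, trivial⟩ v w hv hw⟩

/-- **Lemma 3.2 of [V1] + (3.3), (3.4)** (formulas (3.2)–(3.4) of the paper).
For every integer `k`:
(i) `ρ^k, |ρ|^k ∈ S^k_{2,2}(|ρ|) + S^k_{0,1}(|ρ|)` uniformly in `z ∈ Z₁ ∪ Z₂ ∪ Z₃`;
(ii) `(1−η)ρ^k, (1−η)|ρ|^k ∈ 𝒮_0^k`;
(iii) `(1−η)ρ^k − (1−η)(i√r₀)^k ∈ 𝒮_0^{k−2}`. -/
theorem statement_7 (n : ℕ) (hn : 0 < n)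
    (R₀ : EuclideanSpace ℝ (Fin n) → (EuclideanSpace ℝ (Fin n) →L[ℝ] EuclideanSpace ℝ (Fin n)))
    (hR₀smooth : ContDiff ℝ (⊤ : ℕ∞) R₀)
    (hR₀bdd : ∀ m : ℕ, ∃ C : ℝ, ∀ x, ‖iteratedFDeriv ℝ m R₀ x‖ ≤ C)
    (hR₀sym : ∀ x ξ ζ, (inner ℝ (R₀ x ξ) ζ : ℝ) = (inner ℝ ξ (R₀ x ζ) : ℝ))
    (hR₀ell : ∃ c : ℝ, 0 < c ∧ ∀ x ξ, c * ‖ξ‖ ^ 2 ≤ (inner ℝ (R₀ x ξ) ξ : ℝ))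
    (n₀ : EuclideanSpace ℝ (Fin n) → ℝ) (hn₀smooth : ContDiff ℝ (⊤ : ℕ∞) n₀)
    (hn₀bdd : ∀ m : ℕ, ∃ C : ℝ, ∀ x, ‖iteratedFDeriv ℝ m n₀ x‖ ≤ C)
    (hn₀pos : ∃ c : ℝ, 0 < c ∧ ∀ x, c ≤ n₀ x)
    -- the cutoff function φ₀ and the glancing cutoff η = φ₀(r₀/δ₀)
    (φ₀ : ℝ → ℝ) (hφ₀ : ContDiff ℝ (⊤ : ℕ∞) φ₀) (hφ₀range : ∀ t, φ₀ t ∈ Set.Icc (0 : ℝ) 1)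
    (hφ₀one : ∀ t, |t| ≤ 1 → φ₀ t = 1) (hφ₀zero : ∀ t, 2 ≤ |t| → φ₀ t = 0)
    (δ₀ : ℝ) (hδ₀ : 0 < δ₀)
    -- δ₀ is small enough: |ρ| ≳ ⟨ξ'⟩ on supp (1−η)
    (hδ₀small : ∃ c : ℝ, 0 < c ∧ ∀ z, Zall z → ∀ p, δ₀ ≤ rZero n R₀ p →
      c * jap p.2 ≤ ‖rho n R₀ n₀ z p‖) :
    ∀ k : ℤ,
      -- (i)  ρ^k, |ρ|^k ∈ S^k_{2,2}(|ρ|) + S^k_{0,1}(|ρ|), uniformly in z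
      (∀ α β : ℕ, ∃ C : ℝ, ∀ z, Zall z →
        ∀ (v : Fin α → EuclideanSpace ℝ (Fin n)) (w : Fin β → EuclideanSpace ℝ (Fin n)),
          (∀ i, ‖v i‖ ≤ 1) → (∀ i, ‖w i‖ ≤ 1) → ∀ p,
          (‖Dmix n (fun q => φ₀ (rZero n R₀ q / δ₀) * rho n R₀ n₀ z q ^ k) α β v w p‖ ≤
              C * ‖rho n R₀ n₀ z p‖ ^ ((k : ℝ) - 2 * α - 2 * β) ∧
            ‖Dmix n (fun q => φ₀ (rZero n R₀ q / δ₀) * ((‖rho n R₀ n₀ z q‖ : ℂ) ^ k))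
                α β v w p‖ ≤
              C * ‖rho n R₀ n₀ z p‖ ^ ((k : ℝ) - 2 * α - 2 * β)) ∧
          (‖Dmix n (fun q => (1 - φ₀ (rZero n R₀ q / δ₀)) * rho n R₀ n₀ z q ^ k)
                α β v w p‖ ≤
              C * ‖rho n R₀ n₀ z p‖ ^ ((k : ℝ) - β) ∧
            ‖Dmix n (fun q => (1 - φ₀ (rZero n R₀ q / δ₀)) * ((‖rho n R₀ n₀ z q‖ : ℂ) ^ k))
                α β v w p‖ ≤
              C * ‖rho n R₀ n₀ z p‖ ^ ((k : ℝ) - β))) ∧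
      -- (ii)  (1−η)ρ^k, (1−η)|ρ|^k ∈ 𝒮_0^k
      (∀ α β : ℕ, ∃ C : ℝ, ∀ z, Zall z →
        ∀ (v : Fin α → EuclideanSpace ℝ (Fin n)) (w : Fin β → EuclideanSpace ℝ (Fin n)),
          (∀ i, ‖v i‖ ≤ 1) → (∀ i, ‖w i‖ ≤ 1) → ∀ p,
          ‖Dmix n (fun q => (1 - φ₀ (rZero n R₀ q / δ₀)) * rho n R₀ n₀ z q ^ k)
              α β v w p‖ ≤ C * jap p.2 ^ ((k : ℝ) - β) ∧
          ‖Dmix n (fun q => (1 - φ₀ (rZero n R₀ q / δ₀)) * ((‖rho n R₀ n₀ z q‖ : ℂ) ^ k))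
              α β v w p‖ ≤ C * jap p.2 ^ ((k : ℝ) - β)) ∧
      -- (iii)  (1−η)ρ^k − (1−η)(i√r₀)^k ∈ 𝒮_0^{k−2}
      (∀ α β : ℕ, ∃ C : ℝ, ∀ z, Zall z →
        ∀ (v : Fin α → EuclideanSpace ℝ (Fin n)) (w : Fin β → EuclideanSpace ℝ (Fin n)),
          (∀ i, ‖v i‖ ≤ 1) → (∀ i, ‖w i‖ ≤ 1) → ∀ p,
          ‖Dmix n (fun q => (1 - φ₀ (rZero n R₀ q / δ₀)) *
              (rho n R₀ n₀ z q ^ k -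
                (Complex.I * (Real.sqrt (rZero n R₀ q) : ℂ)) ^ k)) α β v w p‖ ≤
            C * jap p.2 ^ ((k : ℝ) - 2 - β)) :=
  statement_7_general ⟨hR₀smooth, hR₀bdd⟩ hR₀ell ⟨hn₀smooth, hn₀bdd⟩
    (fun x => hn₀pos.elim fun _ h => h.1.trans_le (h.2 x)) isBounded_setOf_Zall
    (fun _ => neg_mem_slitPlane_of_Zall) hφ₀ hφ₀one hφ₀zero hδ₀ hδ₀small

end
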